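/- arXiv:2210.11081 — 2 statements merged into one kernel-verified Lean document; each statement's English description precedes it below -/
import Mathlib

section
/- Let G be a 3-rigid 3-circuit on 9 vertices that has a separating set of 3 vertices, i.e., a set C of 3 vertices such that G − C is disconnected. Then there exists a generic framework (G,p) in ℝ³ that has a nonzero PSD equilibrium stress. -/
/-!
The theorem is proved by deforming a stress of a generic framework into a PSD one by means of a
local ring with two real evaluations.

Take a generic framework `(G, p)` with a nonzero stress, and let `M` be its stress matrix. Since
`G` is a circuit, `M` is nonzero on every edge. After shrinking the separator to a set `C` of at
most three vertices that all have neighbours on both sides `A` and `B`, the matrix splits as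
`M = M₁ + M₂`, where both parts annihilate the affine functions of `p` and are supported on `A ∪ C`
and `B ∪ C` (`IsStressMat.exists_split`). Diagonalizing gives `Mᵢ = ∑ dᵣ uᵣ uᵣᵀ`, with coefficients
`dᵣ` whose signs are not under control.

Signs are changed as follows. There is a local `ℚ`-algebra `O` with residue map `φ : O → ℝ` and an
injective map `ψ : O → ℝ` such that every real number is `φ x` for some `x` with `ψ x > 0`
(`exists_real_place`). Lift the `dᵣ` to elements positive under `ψ`. If the vectors `uᵣ` can be
lifted so that the form still vanishes at all nonadjacent pairs of vertices, then the image of the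
form under `ψ` is PSD. Its kernel contains, up to a diagonal rescaling, the affine functions of a
configuration lifting `p`, whose `ψ`-image is generic because `ψ` is injective
(`psd_stress_of_lift`).

The vanishing conditions say that the columns `(uᵣ(v))ᵣ` and `(uᵣ(w))ᵣ` of nonadjacent `v`, `w` are
orthogonal for the form `diag d`. The columns are lifted one vertex at a time; this works when the
columns of the already treated nonneighbours are independent (`lift_side`). Every vertex has degree
at least four, so on nine vertices there are at most two such nonneighbours, and the dimension
counts `IsSide.dim1` and `IsSide.dim2` show that the columns are independent, with one exception:
`|B ∪ C| = 7` with a two-dimensional part on `B ∪ C`. There all columns of that part lie in a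
plane, where orthogonality and parallelism together form an equivalence relation, and the relations
are lifted class by class (`lift_plane`); genericity of `p` ensures that this is compatible with
the lifts chosen on `C` (`SplitStress.not_linked`).
-/

/-!
Common rigidity-theoretic definitions, following the paper
"Computing maximum likelihood thresholds using graph rigidity".
-/

open scoped BigOperators

section Defs

variable {V : Type*}

/-- A configuration in `ℝ^d` is *generic* if the collection of all of its coordinates
is algebraically independent over `ℚ`. -/
def Generic {d : ℕ} (p : V → EuclideanSpace ℝ (Fin d)) : Prop :=
  AlgebraicIndependent ℚ (fun vi : V × Fin d => p vi.1 vi.2)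

/-- `ω` is an equilibrium stress of the framework `(G, p)`: it is symmetric, supported on
the edges of `G`, and satisfies the equilibrium condition at every vertex. -/
def IsEqStress [Fintype V] (G : SimpleGraph V) {d : ℕ}
    (p : V → EuclideanSpace ℝ (Fin d)) (ω : V → V → ℝ) : Prop :=
  (∀ i j, ω i j = ω j i) ∧
  (∀ i j, ¬ G.Adj i j → ω i j = 0) ∧
  (∀ i, ∑ j, ω i j • (p j - p i) = 0)

/-- The stress matrix associated to a stress `ω`:  off-diagonal entries are `-ω i j`
(which vanish off the edges of the graph) and the diagonal entry at `i` is `∑ k, ω i k`. -/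
def stressMatrix [Fintype V] [DecidableEq V] (ω : V → V → ℝ) : Matrix V V ℝ :=
  fun i j => if i = j then ∑ k, ω i k else - ω i j

/-- The maximum likelihood threshold of `G` (via its rigidity-theoretic characterization):
`d + 1` where `d` is the smallest dimension in which no generic framework `(G, p)` supports
a nonzero PSD equilibrium stress. -/
noncomputable def mlt [Fintype V] [DecidableEq V] (G : SimpleGraph V) : ℕ :=
  sInf {d : ℕ | ∀ p : V → EuclideanSpace ℝ (Fin d), Generic p →
    ∀ ω : V → V → ℝ, IsEqStress G p ω → (stressMatrix ω).PosSemidef → ω = 0} + 1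

/-- The generic completion rank of `G`: `d + 1` where `d` is the smallest dimension in
which no generic framework `(G, p)` supports a nonzero equilibrium stress. -/
noncomputable def gcr [Fintype V] (G : SimpleGraph V) : ℕ :=
  sInf {d : ℕ | ∀ p : V → EuclideanSpace ℝ (Fin d), Generic p →
    ∀ ω : V → V → ℝ, IsEqStress G p ω → ω = 0} + 1

/-- Two frameworks `(G, p)` and `(G, q)` are equivalent: corresponding edge lengths agree. -/
def FrameworkEquiv {d : ℕ} (G : SimpleGraph V) (p q : V → EuclideanSpace ℝ (Fin d)) : Prop :=
  ∀ ⦃u v⦄, G.Adj u v → dist (p u) (p v) = dist (q u) (q v)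

/-- Two configurations are congruent: related by a Euclidean isometry of `ℝ^d`. -/
def FrameworkCongruent {d : ℕ} (p q : V → EuclideanSpace ℝ (Fin d)) : Prop :=
  ∃ T : EuclideanSpace ℝ (Fin d) → EuclideanSpace ℝ (Fin d), Isometry T ∧ q = T ∘ p

/-- A framework is globally rigid if every equivalent framework is congruent to it. -/
def GloballyRigidFramework {d : ℕ} (G : SimpleGraph V)
    (p : V → EuclideanSpace ℝ (Fin d)) : Prop :=
  ∀ q : V → EuclideanSpace ℝ (Fin d), FrameworkEquiv G p q → FrameworkCongruent p q

/-- A framework is rigid if every equivalent framework in some neighborhood of `p`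
is congruent to it. -/
def RigidFramework {d : ℕ} (G : SimpleGraph V)
    (p : V → EuclideanSpace ℝ (Fin d)) : Prop :=
  ∃ U ∈ nhds p, ∀ q ∈ U, FrameworkEquiv G p q → FrameworkCongruent p q

/-- A graph is `d`-rigid if every generic framework in `ℝ^d` is rigid. -/
def IsRigidGraph (d : ℕ) (G : SimpleGraph V) : Prop :=
  ∀ p : V → EuclideanSpace ℝ (Fin d), Generic p → RigidFramework G p

/-- A graph is globally `d`-rigid if every generic framework in `ℝ^d` is globally rigid. -/
def IsGloballyRigidGraph (d : ℕ) (G : SimpleGraph V) : Prop :=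
  ∀ p : V → EuclideanSpace ℝ (Fin d), Generic p → GloballyRigidFramework G p

/-- A graph is `d`-independent if the rows of the rigidity matrix `R(G, p)` are linearly
independent for every generic `p`; equivalently (linear dependencies among the rows of
the rigidity matrix are exactly the equilibrium stresses), no generic framework in `ℝ^d`
supports a nonzero equilibrium stress. -/
def IsIndepGraph [Fintype V] (d : ℕ) (G : SimpleGraph V) : Prop :=
  ∀ p : V → EuclideanSpace ℝ (Fin d), Generic p →
    ∀ ω : V → V → ℝ, IsEqStress G p ω → ω = 0

/-- A graph is a `d`-circuit if it is not `d`-independent but every proper subgraph is. -/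
def IsCircuitGraph [Fintype V] (d : ℕ) (G : SimpleGraph V) : Prop :=
  ¬ IsIndepGraph d G ∧ ∀ H : SimpleGraph V, H < G → IsIndepGraph d H

/-- Vertex connectivity at least `k`: more than `k` vertices, and removing any fewer
than `k` vertices leaves a connected graph. -/
def IsKConnected [Fintype V] (k : ℕ) (G : SimpleGraph V) : Prop :=
  k < Fintype.card V ∧ ∀ S : Set V, S.ncard < k → (G.induce Sᶜ).Connected

/-- `i(X)`: the number of edges of `G` with both endpoints in `X`. -/
noncomputable def edgesWithin (G : SimpleGraph V) (X : Set V) : ℕ :=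
  {e ∈ G.edgeSet | ∀ v ∈ e, v ∈ X}.ncard

/-- `d(X, Y)`: the number of edges of `G` with one endpoint in `X \ Y` and the other
in `Y \ X`. -/
noncomputable def crossEdges (G : SimpleGraph V) (X Y : Set V) : ℕ :=
  {e ∈ G.edgeSet | ∃ u ∈ X \ Y, ∃ v ∈ Y \ X, e = s(u, v)}.ncard

/-- `G` is `(3,6)`-sparse. -/
def Sparse36 (G : SimpleGraph V) : Prop :=
  ∀ X : Set V, 3 ≤ X.ncard → edgesWithin G X ≤ 3 * X.ncard - 6

/-- `X` is 3-critical in `G`. -/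
def ThreeCritical (G : SimpleGraph V) (X : Set V) : Prop :=
  3 ≤ X.ncard ∧ edgesWithin G X = 3 * X.ncard - 6

/-- `G'` (on vertex set `Option V`, with new vertex `none`) is a `d`-dimensional
1-extension of `G`: an edge `xy` of `G` is deleted and the new vertex is joined to
`x`, `y` and `d - 1` further vertices. -/
def IsOneExtension [DecidableEq V] (d : ℕ) (G : SimpleGraph V)
    (G' : SimpleGraph (Option V)) : Prop :=
  ∃ (x y : V) (D : Finset V), G.Adj x y ∧ x ∉ D ∧ y ∉ D ∧ D.card = d - 1 ∧
    (∀ u v : V, G'.Adj (some u) (some v) ↔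
      (G.Adj u v ∧ ¬((u = x ∧ v = y) ∨ (u = y ∧ v = x)))) ∧
    (∀ u : V, G'.Adj (some u) none ↔ (u = x ∨ u = y ∨ u ∈ D))

end Defs

/-! ### A local ring with two real evaluations -/

/-- There is a local `ℚ`-algebra `O` with residue map `φ` onto `ℝ` and a second, injective map
`ψ` into `ℝ` such that every real number lifts to an element that `ψ` makes positive. Take a
polynomial ring over `ℚ` in continuum many variables; `ψ₀` sends them to a transcendence basis of
`ℝ`, and `φ₀` sends them bijectively onto `ℝ`; localize at the kernel of `φ₀`. -/
theorem exists_real_place : ∃ (O : Type) (_ : CommRing O) (_ : Algebra ℚ O) (φ ψ : O →ₐ[ℚ] ℝ),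
    (∀ x, φ x ≠ 0 → IsUnit x) ∧ Function.Injective ψ ∧ ∀ z : ℝ, ∃ x, φ x = z ∧ 0 < ψ x := by
  obtain ⟨s, hs⟩ := exists_isTranscendenceBasis ℚ ℝ
  have hcard : Cardinal.mk s = Cardinal.continuum := by
    have : Nonempty s := by
      by_contra hne
      have := not_nonempty_iff.1 hne
      have : Algebra.IsAlgebraic ℚ ℝ := hs.isEmpty_iff_isAlgebraic.1 inferInstance
      have h := Algebra.IsAlgebraic.cardinalMk_le_max ℚ ℝ
      rw [Cardinal.mk_real, Cardinal.mkRat, max_self] at h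
      exact absurd h (not_le.2 Cardinal.aleph0_lt_continuum)
    have h := hs.lift_cardinalMk_eq_max_lift
    simp only [Cardinal.lift_id, Cardinal.mk_real, Cardinal.mkRat] at h
    rcases le_total (Cardinal.mk s) Cardinal.aleph0 with h1 | h1
    · rw [max_eq_left h1, max_self] at h
      exact absurd h Cardinal.aleph0_lt_continuum.ne'
    · rw [max_eq_right h1, max_eq_left h1] at h
      exact h.symm
  -- the variables can be indexed both by the transcendence basis `s` and by all of `ℝ`
  obtain ⟨e⟩ : Nonempty (s ≃ ℝ) := Cardinal.eq.1 (by rw [hcard, Cardinal.mk_real])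
  let φ0 : MvPolynomial s ℚ →ₐ[ℚ] ℝ := MvPolynomial.aeval e
  let ψ0 : MvPolynomial s ℚ →ₐ[ℚ] ℝ := MvPolynomial.aeval Subtype.val
  have hψ0 : Function.Injective ψ0 := hs.1
  let P : Ideal (MvPolynomial s ℚ) := RingHom.ker φ0
  have : P.IsPrime := RingHom.ker_isPrime _
  have hφu : ∀ y : P.primeCompl, IsUnit (φ0 y) := fun y => by
    have : φ0 y ≠ 0 := fun h => y.2 h
    exact this.isUnit
  have hψu : ∀ y : P.primeCompl, IsUnit (ψ0 y) := fun y => by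
    have : ψ0 y ≠ 0 := fun h => y.2 (by
      have : (y : MvPolynomial s ℚ) = 0 := hψ0 (by simpa using h)
      rw [this]; exact P.zero_mem)
    exact this.isUnit
  let φ : Localization.AtPrime P →+* ℝ := IsLocalization.lift (M := P.primeCompl) (g := φ0.toRingHom) hφu
  let ψ : Localization.AtPrime P →+* ℝ := IsLocalization.lift (M := P.primeCompl) (g := ψ0.toRingHom) hψu
  have hφ : ∀ x, φ (algebraMap _ _ x) = φ0 x := fun x => IsLocalization.lift_eq _ x
  have hψ : ∀ x, ψ (algebraMap _ _ x) = ψ0 x := fun x => IsLocalization.lift_eq _ x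
  refine ⟨Localization.AtPrime P, inferInstance, inferInstance, φ.toRatAlgHom, ψ.toRatAlgHom, ?_, ?_, ?_⟩
  · intro x hx
    change φ x ≠ 0 at hx
    obtain ⟨⟨a, b⟩, hab⟩ := IsLocalization.surj P.primeCompl x
    have ha : a ∈ P.primeCompl := by
      intro ha
      have h1 := congrArg φ hab
      simp only [map_mul, hφ] at h1
      have h2 : φ0 a = 0 := ha
      rw [h2] at h1
      exact (mul_ne_zero hx (hφu b).ne_zero) h1
    have h3 : IsUnit (x * algebraMap _ (Localization.AtPrime P) (b : MvPolynomial s ℚ)) := by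
      rw [hab]; exact IsLocalization.map_units _ (⟨a, ha⟩ : P.primeCompl)
    exact isUnit_of_mul_isUnit_left h3
  · change Function.Injective ψ
    refine (injective_iff_map_eq_zero _).2 fun x hx => ?_
    obtain ⟨⟨a, b⟩, hab⟩ := IsLocalization.surj P.primeCompl x
    have h1 := congrArg ψ hab
    simp only [map_mul, hψ, hx, zero_mul] at h1
    have h2 : a = 0 := hψ0 (by simpa using h1.symm)
    simp only [h2, map_zero] at hab
    have h3 := IsLocalization.map_units (Localization.AtPrime P) b
    exact (h3.mul_left_eq_zero).1 hab
  · intro z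
    change ∃ x, φ x = z ∧ 0 < ψ x
    -- `t ^ 2` is killed by `φ` and positive under `ψ`, so multiples of it correct the sign
    let t : MvPolynomial s ℚ := MvPolynomial.X (e.symm 0)
    have ht : t ≠ 0 := MvPolynomial.X_ne_zero _
    have h1 : φ0 t = 0 := by simp [φ0, t]
    have h2 : ψ0 t ≠ 0 := fun h => ht (hψ0 (by simpa using h))
    obtain ⟨n, hn⟩ := exists_nat_gt (-(ψ0 (MvPolynomial.X (e.symm z))) / (ψ0 t)^2)
    refine ⟨algebraMap _ _ (MvPolynomial.X (e.symm z) + (n : MvPolynomial s ℚ) * t^2), ?_, ?_⟩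
    · rw [hφ]; simp [h1]; simp [φ0]
    · rw [hψ, map_add, map_mul, map_pow, map_natCast]
      have := (div_lt_iff₀ (by positivity)).1 hn
      linarith

/-! ### Lifting solutions of linear systems -/

/-- Solutions of a homogeneous linear system whose rows are independent after reduction by `φ`
lift along `φ`: `A Aᵀ` is invertible over `O`, so an arbitrary lift `y` can be corrected to
`y - Aᵀ (A Aᵀ)⁻¹ A y`. -/
theorem lift_kernel {O : Type*} [CommRing O] [Algebra ℚ O] (φ : O →ₐ[ℚ] ℝ)
    (hu : ∀ x, φ x ≠ 0 → IsUnit x) (hs : Function.Surjective φ)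
    {J R : Type*} [Fintype J] [DecidableEq J] [Fintype R] (A : Matrix J R O)
    (hA : LinearIndependent ℝ (fun j r => φ (A j r))) (x0 : R → ℝ)
    (h0 : ∀ j, ∑ r, φ (A j r) * x0 r = 0) :
    ∃ x : R → O, (∀ r, φ (x r) = x0 r) ∧ ∀ j, ∑ r, A j r * x r = 0 := by
  choose y hy using fun r => hs (x0 r)
  let A0 : Matrix J R ℝ := A.map φ
  have hdet : IsUnit (A * A.transpose).det := by
    apply hu
    have h1 : φ (A * A.transpose).det = (A0 * A0.transpose).det := by
      rw [AlgHom.map_det]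
      congr 1
      ext i j
      simp [A0, Matrix.mul_apply]
    rw [h1]
    have hinj : Function.Injective A0.vecMul := by
      rw [Matrix.vecMul_injective_iff]
      exact hA
    have := Matrix.PosDef.mul_conjTranspose_self A0 hinj
    rw [Matrix.conjTranspose_eq_transpose_of_trivial] at this
    exact this.det_pos.ne'
  let M := A * A.transpose
  let t : J → O := M⁻¹.mulVec (A.mulVec y)
  refine ⟨fun r => y r - (A.transpose.mulVec t) r, fun r => ?_, fun j => ?_⟩
  · have h2 : ∀ j, φ ((A.mulVec y) j) = 0 := by
      intro j
      simp only [Matrix.mulVec, dotProduct, map_sum, map_mul, hy]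
      exact h0 j
    have h3 : ∀ j, φ (t j) = 0 := by
      intro j
      simp only [t]
      rw [Matrix.mulVec, dotProduct, map_sum]
      exact Finset.sum_eq_zero fun i _ => by rw [map_mul, h2, mul_zero]
    have h4 : φ ((A.transpose.mulVec t) r) = 0 := by
      rw [Matrix.mulVec, dotProduct, map_sum]
      exact Finset.sum_eq_zero fun i _ => by rw [map_mul, h3, mul_zero]
    rw [map_sub, h4, hy, sub_zero]
  · have h5 : A.mulVec (y - A.transpose.mulVec t) = 0 := by
      rw [Matrix.mulVec_sub, Matrix.mulVec_mulVec, Matrix.mulVec_mulVec,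
        Matrix.mul_nonsing_inv _ hdet, Matrix.one_mulVec, sub_self]
    exact congrFun h5 j

/-! ### PSD stresses from lifted quadratic forms -/

/-- Let the rows `φ (u r)` be linearly independent affine dependencies of a generic configuration,
and let `∑ d r • u r (u r)ᵀ` vanish over `O` at all nonadjacent pairs, with every `d r` positive
under `ψ`. Then some generic configuration carries a nonzero PSD stress. The constant function and
the coordinates of `p` lift to functions over `O` annihilated by the `u r`; dividing the latter by
the former and applying `ψ` gives the new configuration, and the form with the vectors `u r`
rescaled by the lifted constant function gives its stress matrix. The configuration is generic
because its coordinates have algebraically independent images under `φ` and `ψ` is injective. -/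
theorem psd_stress_of_lift {O : Type*} [CommRing O] [Algebra ℚ O] (φ ψ : O →ₐ[ℚ] ℝ)
    (hu : ∀ x, φ x ≠ 0 → IsUnit x) (hs : Function.Surjective φ) (hψ : Function.Injective ψ)
    {V : Type*} [Fintype V] [DecidableEq V] (G : SimpleGraph V)
    (p : V → EuclideanSpace ℝ (Fin 3)) (hp : Generic p)
    {R : Type*} [Fintype R] [DecidableEq R] (u : R → V → O) (d : R → O)
    (hd : ∀ r, 0 < ψ (d r))
    (hind : LinearIndependent ℝ (fun r v => φ (u r v)))
    (h1 : ∀ r, ∑ v, φ (u r v) = 0) (hpk : ∀ r k, ∑ v, φ (u r v) * p v k = 0)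
    (horth : ∀ v w, v ≠ w → ¬ G.Adj v w → ∑ r, d r * (u r v * u r w) = 0)
    (hne : ∃ v w, v ≠ w ∧ ∑ r, d r * (u r v * u r w) ≠ 0) :
    ∃ p : V → EuclideanSpace ℝ (Fin 3), Generic p ∧
      ∃ ω : V → V → ℝ, IsEqStress G p ω ∧ (stressMatrix ω).PosSemidef ∧ ω ≠ 0 := by
  obtain ⟨y, hy, hy0⟩ := lift_kernel φ hu hs (Matrix.of u) hind (fun _ => 1)
    (fun r => by simpa using h1 r)
  have hx : ∀ k : Fin 3, ∃ x : V → O, (∀ v, φ (x v) = p v k) ∧ ∀ r, ∑ v, u r v * x v = 0 :=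
    fun k => lift_kernel φ hu hs (Matrix.of u) hind (fun v => p v k) (fun r => hpk r k)
  choose x hxφ hx0 using hx
  have hyu : ∀ v, IsUnit (y v) := fun v => hu _ (by rw [hy]; exact one_ne_zero)
  choose z hz using fun v => (hyu v).exists_right_inv
  have hzφ : ∀ v, φ (z v) = 1 := fun v => by
    have := congrArg φ (hz v)
    rwa [map_mul, hy, one_mul, map_one] at this
  -- `y v` lifts `1` and `x k v` lifts `p v k`; both are orthogonal to all `u r`
  let q : V → EuclideanSpace ℝ (Fin 3) := fun v => WithLp.toLp 2 (fun k => ψ (x k v * z v))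
  have hq : ∀ v k, q v k = ψ (x k v * z v) := fun v k => rfl
  let t : R → V → ℝ := fun r v => ψ (u r v * y v)
  have ht1 : ∀ r, ∑ v, t r v = 0 := fun r => by
    simp only [t]; rw [← map_sum]; exact (congrArg ψ (hy0 r)).trans (map_zero ψ)
  have htk : ∀ r k, ∑ v, t r v * q v k = 0 := fun r k => by
    simp only [t, hq]
    rw [← map_zero ψ, ← hx0 k r, map_sum]
    refine Finset.sum_congr rfl fun v _ => ?_
    rw [← map_mul]
    congr 1
    linear_combination (u r v * x k v) * hz v
  let M : V → V → ℝ := fun v w => ∑ r, ψ (d r) * (t r v * t r w)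
  have hMrow : ∀ v, ∑ w, M v w = 0 := fun v => by
    simp only [M]
    rw [Finset.sum_comm]
    refine Finset.sum_eq_zero fun r _ => ?_
    rw [← Finset.mul_sum, ← Finset.mul_sum, ht1, mul_zero, mul_zero]
  have hMk : ∀ v k, ∑ w, M v w * q w k = 0 := fun v k => by
    simp only [M, Finset.sum_mul]
    rw [Finset.sum_comm]
    refine Finset.sum_eq_zero fun r _ => ?_
    have : ∀ w, ψ (d r) * (t r v * t r w) * q w k = (ψ (d r) * t r v) * (t r w * q w k) :=
      fun w => by ring
    simp only [this]
    rw [← Finset.mul_sum, htk, mul_zero]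
  have hMψ : ∀ v w, M v w = ψ ((∑ r, d r * (u r v * u r w)) * (y v * y w)) := fun v w => by
    rw [Finset.sum_mul, map_sum]
    refine Finset.sum_congr rfl fun r _ => ?_
    simp only [t, map_mul]; ring
  let ω : V → V → ℝ := fun v w => if v = w then 0 else - M v w
  have hωM : stressMatrix ω = Matrix.of M := by
    ext v w
    simp only [stressMatrix, Matrix.of_apply]
    split_ifs with h
    · subst h
      have h2 := hMrow v
      rw [← Finset.add_sum_erase _ _ (Finset.mem_univ v)] at h2
      rw [← Finset.add_sum_erase _ _ (Finset.mem_univ v)]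
      have h3 : ∑ k ∈ Finset.univ.erase v, ω v k = ∑ k ∈ Finset.univ.erase v, - M v k := by
        refine Finset.sum_congr rfl fun k hk => ?_
        simp only [ω, if_neg (Finset.ne_of_mem_erase hk).symm]
      rw [h3, Finset.sum_neg_distrib]
      simp only [ω, if_true]
      linarith
    · simp [ω, h]
  refine ⟨q, ?_, ω, ⟨?_, ?_, ?_⟩, ?_, ?_⟩
  · have h2 : AlgebraicIndependent ℚ (fun vi : V × Fin 3 => x vi.2 vi.1 * z vi.1) := by
      refine AlgebraicIndependent.of_comp φ ?_
      have : (φ ∘ fun vi : V × Fin 3 => x vi.2 vi.1 * z vi.1) = fun vi => p vi.1 vi.2 := by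
        funext vi
        simp [hxφ, hzφ]
      rw [this]; exact hp
    exact h2.map' hψ
  · intro v w
    simp only [ω, M]
    by_cases h : v = w
    · simp [h]
    · rw [if_neg h, if_neg (Ne.symm h)]
      congr 1
      exact Finset.sum_congr rfl fun r _ => by ring
  · intro v w h
    simp only [ω]
    split_ifs with h2
    · rfl
    · rw [hMψ, horth v w h2 h]; simp
  · intro v
    ext k
    have h2 : ∑ w, ω v w * (q w k - q v k) = 0 := by
      have h3 : ∀ w, ω v w * (q w k - q v k) = -(M v w * q w k) + M v w * q v k := by
        intro w
        simp only [ω]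
        split_ifs with h
        · subst h; ring
        · ring
      simp only [h3]
      rw [Finset.sum_add_distrib, Finset.sum_neg_distrib, hMk, ← Finset.sum_mul, hMrow]
      simp
    simpa using h2
  · rw [hωM]
    let B : Matrix R V ℝ := Matrix.of fun r v => Real.sqrt (ψ (d r)) * t r v
    have hB : Matrix.of M = B.conjTranspose * B := by
      ext v w
      simp only [M, B, Matrix.mul_apply, Matrix.conjTranspose_apply, Matrix.of_apply, star_trivial]
      refine Finset.sum_congr rfl fun r _ => ?_
      have := Real.mul_self_sqrt (hd r).le
      linear_combination (-(t r v * t r w)) * this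
    rw [hB]
    exact Matrix.posSemidef_conjTranspose_mul_self B
  · obtain ⟨v, w, hvw, h⟩ := hne
    intro h0
    have h2 := congrFun (congrFun h0 v) w
    simp only [ω, if_neg hvw, Pi.zero_apply, neg_eq_zero, hMψ] at h2
    have h3 := hψ (h2.trans (map_zero ψ).symm)
    exact h (((hyu v).mul (hyu w)).mul_left_eq_zero.1 h3)

/-! ### Affine functions on generic configurations -/

/-- The affine function on `ℝ³` with constant term `a 0` and linear part `(a 1, a 2, a 3)`,
evaluated at the point `p v`. -/
def aff {V : Type*} (p : V → EuclideanSpace ℝ (Fin 3)) (a : Fin 4 → ℝ) (v : V) : ℝ :=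
  a 0 + ∑ k : Fin 3, a k.succ * p v k

/-- A rational polynomial in the coordinates of distinct points of a generic configuration is
nonzero as soon as it is nonzero at one rational choice of coordinates. -/
theorem Generic.aeval_ne_zero {V : Type*} {p : V → EuclideanSpace ℝ (Fin 3)} (hp : Generic p)
    {n : ℕ} (e : Fin n → V) (he : Function.Injective e) (Q : MvPolynomial (Fin n × Fin 3) ℚ)
    (x0 : Fin n × Fin 3 → ℚ) (hx0 : MvPolynomial.aeval x0 Q ≠ 0) :
    MvPolynomial.aeval (fun ik : Fin n × Fin 3 => p (e ik.1) ik.2) Q ≠ 0 := by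
  have h1 : AlgebraicIndependent ℚ (fun ik : Fin n × Fin 3 => p (e ik.1) ik.2) :=
    AlgebraicIndependent.comp hp (fun ik : Fin n × Fin 3 => (e ik.1, ik.2)) (by
      rintro ⟨i, k⟩ ⟨j, l⟩ h
      simp only [Prod.mk.injEq] at h
      rw [he h.1, h.2])
  intro h
  have h2 : Q = 0 := h1 (h.trans (map_zero _).symm)
  exact hx0 (by rw [h2, map_zero])

theorem Generic.det_ne_zero {V : Type*} {p : V → EuclideanSpace ℝ (Fin 3)} (hp : Generic p)
    (e : Fin 4 → V) (he : Function.Injective e) :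
    (Matrix.of fun i : Fin 4 => (Fin.cons 1 (fun k : Fin 3 => p (e i) k) : Fin 4 → ℝ)).det ≠ 0 := by
  let Q : MvPolynomial (Fin 4 × Fin 3) ℚ :=
    (Matrix.of fun i : Fin 4 => (Fin.cons 1 (fun k : Fin 3 => MvPolynomial.X (i, k)) :
      Fin 4 → MvPolynomial (Fin 4 × Fin 3) ℚ)).det
  have hQ : ∀ {S : Type} [Field S] [Algebra ℚ S] (x : Fin 4 × Fin 3 → S),
      MvPolynomial.aeval x Q =
        (Matrix.of fun i : Fin 4 => (Fin.cons 1 (fun k : Fin 3 => x (i, k)) : Fin 4 → S)).det := by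
    intro S _ _ x
    rw [AlgHom.map_det]
    congr 1
    ext i j
    refine Fin.cases ?_ (fun k => ?_) j <;> simp
  have h := hp.aeval_ne_zero e he Q (fun ik => if ik.1 = ik.2.succ then 1 else 0) (by
    rw [hQ]
    have h4 : (Matrix.of fun i : Fin 4 => (Fin.cons 1 (fun k : Fin 3 =>
        if i = k.succ then 1 else 0) : Fin 4 → ℚ)) =
        !![1, 0, 0, 0; 1, 1, 0, 0; 1, 0, 1, 0; 1, 0, 0, 1] := by
      ext i j
      fin_cases i <;> fin_cases j <;> rfl
    rw [h4]
    simp [Matrix.det_succ_row_zero, Fin.sum_univ_succ])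
  rwa [hQ] at h

theorem aff_eq_dot {V : Type*} (p : V → EuclideanSpace ℝ (Fin 3)) (a : Fin 4 → ℝ) (v : V) :
    aff p a v = ∑ j, (Fin.cons 1 (fun k : Fin 3 => p v k) : Fin 4 → ℝ) j * a j := by
  rw [Fin.sum_univ_succ]
  simp [aff, mul_comm]

/-- Real values on at most four points of a generic configuration are interpolated by an affine
function. -/
theorem Generic.interp {V : Type*} [Fintype V] [DecidableEq V] {p : V → EuclideanSpace ℝ (Fin 3)}
    (hp : Generic p) (hV : 4 ≤ Fintype.card V) (S : Finset V) (hS : S.card ≤ 4) (g : V → ℝ) :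
    ∃ a, ∀ v ∈ S, aff p a v = g v := by
  obtain ⟨T, hST, hT⟩ := Finset.exists_superset_card_eq hS hV
  let e : Fin 4 ≃ T := (T.equivFinOfCardEq hT).symm
  have hdet := hp.det_ne_zero (fun i => (e i : V))
    (Subtype.val_injective.comp e.injective)
  set N := Matrix.of fun i : Fin 4 => (Fin.cons 1 (fun k : Fin 3 => p (e i) k) : Fin 4 → ℝ)
  refine ⟨N⁻¹.mulVec (fun i => g (e i)), fun v hv => ?_⟩
  have h1 : N.mulVec (N⁻¹.mulVec (fun i => g (e i))) = fun i => g (e i) := by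
    rw [Matrix.mulVec_mulVec, Matrix.mul_nonsing_inv _ hdet.isUnit, Matrix.one_mulVec]
  have h2 := congrFun h1 (e.symm ⟨v, hST hv⟩)
  rw [aff_eq_dot]
  simpa [N, Matrix.mulVec, dotProduct] using h2

theorem Generic.aff_eq_zero {V : Type*} [DecidableEq V] {p : V → EuclideanSpace ℝ (Fin 3)}
    (hp : Generic p) (S : Finset V) (hS : 4 ≤ S.card) (a : Fin 4 → ℝ)
    (ha : ∀ v ∈ S, aff p a v = 0) : a = 0 := by
  obtain ⟨T, hTS, hT⟩ := Finset.exists_subset_card_eq hS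
  let e : Fin 4 ≃ T := (T.equivFinOfCardEq hT).symm
  have hdet := hp.det_ne_zero (fun i => (e i : V))
    (Subtype.val_injective.comp e.injective)
  refine Matrix.eq_zero_of_mulVec_eq_zero hdet ?_
  funext i
  have := ha (e i) (hTS (e i).2)
  rw [aff_eq_dot] at this
  exact this

/-- At most four points of a generic configuration carry no nonzero affine dependency. -/
theorem Generic.dep_eq_zero {V : Type*} [Fintype V] [DecidableEq V]
    {p : V → EuclideanSpace ℝ (Fin 3)} (hp : Generic p) (hV : 4 ≤ Fintype.card V)
    (S : Finset V) (hS : S.card ≤ 4) (κ : V → ℝ) (hκ : ∀ v ∉ S, κ v = 0)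
    (h : ∀ a, ∑ v, κ v * aff p a v = 0) : κ = 0 := by
  funext v
  by_cases hv : v ∈ S
  · obtain ⟨a, ha⟩ := hp.interp hV S hS (fun w => if w = v then 1 else 0)
    have h1 := h a
    rw [Finset.sum_eq_single v] at h1
    · simpa [ha v hv] using h1
    · intro w _ hw
      by_cases hwS : w ∈ S
      · rw [ha w hwS, if_neg hw, mul_zero]
      · rw [hκ w hwS, zero_mul]
    · simp
  · exact hκ v hv

/-- Coefficients, in the convention of `aff`, of an affine function vanishing at `P`, `Q` and `T`;
its linear part is the cross product of `Q - P` and `T - P`. Defined over any commutative ring so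
that it can also be read as a polynomial in the coordinates. -/
def planeThrough {S : Type*} [CommRing S] (P Q T : Fin 3 → S) : Fin 4 → S :=
  let n : Fin 3 → S := ![(Q 1 - P 1) * (T 2 - P 2) - (Q 2 - P 2) * (T 1 - P 1),
    (Q 2 - P 2) * (T 0 - P 0) - (Q 0 - P 0) * (T 2 - P 2),
    (Q 0 - P 0) * (T 1 - P 1) - (Q 1 - P 1) * (T 0 - P 0)]
  ![-(n 0 * P 0 + n 1 * P 1 + n 2 * P 2), n 0, n 1, n 2]

/-- The value at `X` of the affine function `planeThrough P Q T`. -/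
def planeEval {S : Type*} [CommRing S] (P Q T X : Fin 3 → S) : S :=
  planeThrough P Q T 0 + planeThrough P Q T 1 * X 0 + planeThrough P Q T 2 * X 1 +
    planeThrough P Q T 3 * X 2

/-- For eight distinct points of a generic configuration, let `f` and `h` be affine functions
vanishing at the first three and at the next three points. The values of the pair `(f, h)` at the
last two points are linearly independent. -/
theorem Generic.planes {V : Type*} {p : V → EuclideanSpace ℝ (Fin 3)} (hp : Generic p)
    (e : Fin 8 → V) (he : Function.Injective e) :
    ∃ f h : Fin 4 → ℝ, (aff p f (e 0) = 0 ∧ aff p f (e 1) = 0 ∧ aff p f (e 2) = 0) ∧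
      (aff p h (e 3) = 0 ∧ aff p h (e 4) = 0 ∧ aff p h (e 5) = 0) ∧
      aff p f (e 6) * aff p h (e 7) - aff p f (e 7) * aff p h (e 6) ≠ 0 := by
  have key : ∀ P Q T v, aff p (planeThrough P Q T) v = planeEval P Q T (p v) := by
    intro P Q T v
    simp only [aff, planeEval, Fin.sum_univ_three]
    change _ + (planeThrough P Q T 1 * p v 0 + planeThrough P Q T 2 * p v 1 +
      planeThrough P Q T 3 * p v 2) = _
    ring
  refine ⟨planeThrough (p (e 0)) (p (e 1)) (p (e 2)), planeThrough (p (e 3)) (p (e 4)) (p (e 5)),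
    ⟨?_, ?_, ?_⟩, ⟨?_, ?_, ?_⟩, ?_⟩
  iterate 6
    rw [key]; simp [planeEval, planeThrough]; ring
  simp only [key]
  let P : ∀ {S : Type} [CommRing S], (Fin 8 × Fin 3 → S) → S := fun {S} _ x =>
    let y : Fin 8 → Fin 3 → S := fun i k => x (i, k)
    planeEval (y 0) (y 1) (y 2) (y 6) * planeEval (y 3) (y 4) (y 5) (y 7) -
      planeEval (y 0) (y 1) (y 2) (y 7) * planeEval (y 3) (y 4) (y 5) (y 6)
  have hP : ∀ {S : Type} [Field S] [Algebra ℚ S] (x : Fin 8 × Fin 3 → S),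
      MvPolynomial.aeval x (P (fun ik => MvPolynomial.X ik : _ → MvPolynomial _ ℚ)) = P x := by
    intro S _ _ x
    simp [P, planeEval, planeThrough]
  let x0 : Fin 8 → Fin 3 → ℚ := ![![0,0,0],![0,1,0],![0,0,1],![0,0,0],![1,0,0],![0,1,0],
    ![0,0,1],![1,1,0]]
  have := hp.aeval_ne_zero e he (P (fun ik => MvPolynomial.X ik)) (fun ik => x0 ik.1 ik.2) (by
    rw [hP]
    simp [P, planeEval, planeThrough, x0])
  rw [hP] at this
  exact this

/-! ### Stress matrices of circuits -/

/-- `M` is a stress matrix of `(G, p)`: symmetric, zero at distinct nonadjacent pairs, and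
annihilating all affine functions of the points `p v`. -/
structure IsStressMat {V : Type*} [Fintype V] (G : SimpleGraph V)
    (p : V → EuclideanSpace ℝ (Fin 3)) (M : V → V → ℝ) : Prop where
  symm : ∀ v w, M v w = M w v
  supp : ∀ v w, v ≠ w → ¬ G.Adj v w → M v w = 0
  eq : ∀ a v, ∑ w, M v w * aff p a w = 0

theorem IsStressMat.of_stress {V : Type*} [Fintype V] [DecidableEq V] {G : SimpleGraph V}
    {p : V → EuclideanSpace ℝ (Fin 3)} {ω : V → V → ℝ} (h : IsEqStress G p ω) (h0 : ω ≠ 0) :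
    IsStressMat G p (stressMatrix ω) ∧ ∃ v w, v ≠ w ∧ stressMatrix ω v w ≠ 0 := by
  obtain ⟨hs, hz, he⟩ := h
  have hdiag : ∀ v, ω v v = 0 := fun v => hz v v (G.loopless.irrefl v)
  refine ⟨⟨fun v w => ?_, fun v w hvw hn => ?_, fun a v => ?_⟩, ?_⟩
  · by_cases h : v = w
    · rw [h]
    · simp only [stressMatrix, if_neg h, if_neg (Ne.symm h), hs v w]
  · simp only [stressMatrix, if_neg hvw, hz v w hn, neg_zero]
  · have h1 : ∀ w, stressMatrix ω v w * aff p a w =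
        (if v = w then (∑ k, ω v k) * aff p a v else 0) - ω v w * aff p a w := by
      intro w
      simp only [stressMatrix]
      split_ifs with h
      · subst h; rw [hdiag]; ring
      · ring
    simp only [h1, Finset.sum_sub_distrib, Finset.sum_ite_eq, Finset.mem_univ, if_true,
      Finset.sum_mul]
    rw [← Finset.sum_sub_distrib]
    have h2 : ∀ w, ω v w * aff p a v - ω v w * aff p a w =
        - ∑ k : Fin 3, a k.succ * (ω v w * (p w k - p v k)) := by
      intro w
      simp only [aff, Fin.sum_univ_three]
      ring
    simp only [h2, Finset.sum_neg_distrib]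
    rw [Finset.sum_comm]
    have h3 : ∀ k : Fin 3, ∑ w, ω v w * (p w k - p v k) = 0 := fun k => by
      have := congrArg (fun x : EuclideanSpace ℝ (Fin 3) => x k) (he v)
      simpa using this
    simp [← Finset.mul_sum, h3]
  · by_contra hcon
    push Not at hcon
    apply h0
    funext v w
    by_cases h : v = w
    · rw [h]; exact hdiag w
    · have := hcon v w h
      simpa [stressMatrix, h] using this

theorem IsStressMat.eq_zero_of_indep {V : Type*} [Fintype V] [DecidableEq V] {H : SimpleGraph V}
    {p : V → EuclideanSpace ℝ (Fin 3)} (hp : Generic p) {M : V → V → ℝ}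
    (h : IsStressMat H p M) (hH : IsIndepGraph 3 H) : ∀ v w, v ≠ w → M v w = 0 := by
  have h1 : (fun v w => if v = w then 0 else - M v w) = (0 : V → V → ℝ) := by
    apply hH p hp
    refine ⟨fun v w => ?_, fun v w hn => ?_, fun v => ?_⟩
    · by_cases hvw : v = w
      · simp [hvw]
      · simp [hvw, Ne.symm hvw, h.symm v w]
    · by_cases hvw : v = w
      · simp [hvw]
      · simp [hvw, h.supp v w hvw hn]
    · have hone : ∑ w, M v w = 0 := by
        simpa [aff] using h.eq (Fin.cons 1 0) v
      ext k
      have hk : ∑ w, M v w * p w k = 0 := by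
        simpa [aff, Pi.single_apply, Fin.succ_inj] using h.eq (Pi.single k.succ 1) v
      have h2 : ∀ w, (if v = w then 0 else - M v w) * (p w k - p v k) =
          M v w * p v k - M v w * p w k := by
        intro w
        split_ifs with h
        · subst h; ring
        · ring
      have h3 : ∑ w, (if v = w then 0 else - M v w) * (p w k - p v k) = 0 := by
        simp only [h2, Finset.sum_sub_distrib, ← Finset.sum_mul, hone, hk]
        simp
      refine Eq.trans ?_ h3
      rw [WithLp.ofLp_sum, Finset.sum_apply]
      rfl
  intro v w hvw
  have := congrFun (congrFun h1 v) w
  simpa [hvw] using this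

/-- In a circuit, a stress matrix with a nonzero off-diagonal entry is nonzero on every edge:
otherwise it would be a stress matrix for a proper subgraph. -/
theorem IsStressMat.full_support {V : Type*} [Fintype V] [DecidableEq V] {G : SimpleGraph V}
    (hcirc : IsCircuitGraph 3 G) {p : V → EuclideanSpace ℝ (Fin 3)} (hp : Generic p)
    {M : V → V → ℝ} (h : IsStressMat G p M) (hne : ∃ v w, v ≠ w ∧ M v w ≠ 0)
    {x y : V} (hxy : G.Adj x y) : M x y ≠ 0 := by
  intro h0
  obtain ⟨v, w, hvw, hM⟩ := hne
  let H := G.deleteEdges {s(x, y)}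
  have hlt : H < G := by
    refine lt_of_le_of_ne (G.deleteEdges_le _) fun hHG => ?_
    have : H.Adj x y := by rw [hHG]; exact hxy
    simp [H] at this
  refine hM (IsStressMat.eq_zero_of_indep hp (H := H) ⟨h.symm, fun a b hab hn => ?_, h.eq⟩
    (hcirc.2 H hlt) v w hvw)
  by_cases hG : G.Adj a b
  · have : s(a, b) = s(x, y) := by
      by_contra hc
      exact hn (by simp only [H, SimpleGraph.deleteEdges_adj]; exact ⟨hG, hc⟩)
    rcases Sym2.eq_iff.1 this with ⟨rfl, rfl⟩ | ⟨rfl, rfl⟩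
    · exact h0
    · rw [h.symm]; exact h0
  · exact h.supp a b hab hG

/-- A `3`-rigid graph has no isolated vertex: moving only that vertex would preserve all edge
lengths but change its distance to another vertex. -/
theorem IsRigidGraph.no_isolated {V : Type*} [Fintype V] [DecidableEq V] {G : SimpleGraph V}
    (hrigid : IsRigidGraph 3 G) {p : V → EuclideanSpace ℝ (Fin 3)} (hp : Generic p)
    (v u : V) (huv : u ≠ v) : ∃ w, G.Adj v w := by
  by_contra hcon
  push Not at hcon
  obtain ⟨U, hU, hq⟩ := hrigid p hp
  let q : ℝ → V → EuclideanSpace ℝ (Fin 3) := fun ε => Function.update p v (p v + ε • (p v - p u))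
  have hcont : Continuous q := by
    refine continuous_pi fun w => ?_
    by_cases h : w = v
    · subst h; simp only [q, Function.update_self]; fun_prop
    · simp only [q, Function.update_of_ne h]; fun_prop
  have hq0 : q 0 = p := by simp [q]
  have hmem : ∀ᶠ ε in nhdsWithin 0 (Set.Ioi 0), q ε ∈ U := by
    apply Filter.Eventually.filter_mono nhdsWithin_le_nhds
    exact hcont.continuousAt.eventually_mem (by rw [hq0]; exact hU)
  obtain ⟨ε, hεU, hε⟩ := (hmem.and self_mem_nhdsWithin).exists
  have hε : 0 < ε := hε
  obtain ⟨T, hT, hqT⟩ := hq (q ε) hεU (by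
    intro a b hab
    have ha : a ≠ v := fun h => hcon b (h ▸ hab)
    have hb : b ≠ v := fun h => hcon a (h ▸ hab.symm)
    simp [q, Function.update_of_ne ha, Function.update_of_ne hb])
  have h1 : dist (q ε v) (q ε u) = dist (p v) (p u) := by
    rw [hqT]; exact hT.dist_eq _ _
  have h2 : q ε v - q ε u = (1 + ε) • (p v - p u) := by
    simp only [q, Function.update_self, Function.update_of_ne huv]
    rw [add_smul, one_smul]; abel
  rw [dist_eq_norm, h2, dist_eq_norm, norm_smul, Real.norm_of_nonneg (by linarith)] at h1
  have h3 : ‖p v - p u‖ = 0 := by nlinarith [norm_nonneg (p v - p u)]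
  have h4 : p v = p u := sub_eq_zero.1 (norm_eq_zero.1 h3)
  have h5 : (v, (0 : Fin 3)) = (u, 0) := hp.injective (by simp [h4])
  exact huv (Prod.ext_iff.1 h5).1.symm

/-- Closed neighbourhoods have more than four elements: the row of `v` is a nonzero affine
dependency of the points in its closed neighbourhood. -/
theorem IsStressMat.four_lt_closedNbhd {V : Type*} [Fintype V] [DecidableEq V] {G : SimpleGraph V}
    (hcirc : IsCircuitGraph 3 G) (hrigid : IsRigidGraph 3 G) (hV : 4 ≤ Fintype.card V)
    {p : V → EuclideanSpace ℝ (Fin 3)} (hp : Generic p)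
    {M : V → V → ℝ} (h : IsStressMat G p M) (hne : ∃ v w, v ≠ w ∧ M v w ≠ 0)
    (v : V) (S : Finset V) (hS : ∀ w, w = v ∨ G.Adj v w → w ∈ S) : 4 < S.card := by
  by_contra hlt
  have h0 := hp.dep_eq_zero hV S (not_lt.1 hlt) (M v) (fun w hw => by
    have h1 : w ≠ v := fun e => hw (hS w (Or.inl e))
    exact h.supp v w h1.symm fun e => hw (hS w (Or.inr e))) (fun a => h.eq a v)
  have : ∃ u, u ≠ v := by
    have : Nontrivial V := Fintype.one_lt_card_iff_nontrivial.1 (by omega)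
    exact exists_ne v
  obtain ⟨u, hu⟩ := this
  obtain ⟨w, hw⟩ := hrigid.no_isolated hp v u hu
  exact h.full_support hcirc hp hne hw (congrFun h0 w)

/-! ### Separations -/

/-- The vertex set is the disjoint union of `A`, `B` and `C`, and no edge joins `A` to `B`. Neither
side is required to be nonempty. -/
structure IsSep {V : Type*} [Fintype V] (G : SimpleGraph V) (A B C : Finset V) : Prop where
  cover : ∀ v, v ∈ A ∨ v ∈ B ∨ v ∈ C
  disjAB : ∀ v ∈ A, v ∉ B
  disjAC : ∀ v ∈ A, v ∉ C
  disjBC : ∀ v ∈ B, v ∉ C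
  noEdge : ∀ a ∈ A, ∀ b ∈ B, ¬ G.Adj a b

theorem IsSep.swap {V : Type*} [Fintype V] {G : SimpleGraph V} {A B C : Finset V}
    (h : IsSep G A B C) : IsSep G B A C :=
  ⟨fun v => by rcases h.cover v with h | h | h <;> tauto, fun v hb ha => h.disjAB v ha hb,
    h.disjBC, h.disjAC, fun b hb a ha e => h.noEdge a ha b hb e.symm⟩

theorem IsSep.card {V : Type*} [Fintype V] [DecidableEq V] {G : SimpleGraph V} {A B C : Finset V}
    (h : IsSep G A B C) : A.card + B.card + C.card = Fintype.card V := by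
  rw [← Finset.card_union_of_disjoint (Finset.disjoint_left.2 h.disjAB),
    ← Finset.card_union_of_disjoint, Finset.card_eq_iff_eq_univ]
  · ext v
    have := h.cover v
    simp only [Finset.mem_union, Finset.mem_univ, iff_true]
    tauto
  · rw [Finset.disjoint_left]
    intro v hv
    rcases Finset.mem_union.1 hv with hv | hv
    · exact h.disjAC v hv
    · exact h.disjBC v hv

theorem exists_sep {V : Type*} [Fintype V] [DecidableEq V] {G : SimpleGraph V}
    (hcard : Fintype.card V = 9)
    (hsep : ∃ C : Set V, C.ncard = 3 ∧ ¬ (G.induce Cᶜ).Connected) :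
    ∃ A B C : Finset V, IsSep G A B C ∧ A.Nonempty ∧ B.Nonempty ∧ C.card ≤ 3 := by
  classical
  obtain ⟨C, hC, hcon⟩ := hsep
  have hne : Nonempty (Cᶜ : Set V) := by
    by_contra h
    rw [Set.nonempty_coe_sort, Set.not_nonempty_iff_eq_empty, Set.compl_empty_iff] at h
    rw [h, Set.ncard_univ, Nat.card_eq_fintype_card] at hC
    omega
  have h1 : ¬ (G.induce Cᶜ).Preconnected := fun h => hcon ⟨h⟩
  simp only [SimpleGraph.Preconnected, not_forall] at h1
  obtain ⟨x, y, hxy⟩ := h1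
  refine ⟨Finset.univ.filter fun v => ∃ h : v ∈ Cᶜ, (G.induce Cᶜ).Reachable x ⟨v, h⟩,
    Finset.univ.filter fun v => ∃ h : v ∈ Cᶜ, ¬ (G.induce Cᶜ).Reachable x ⟨v, h⟩,
    Finset.univ.filter fun v => v ∈ C, ⟨?_, ?_, ?_, ?_, ?_⟩, ⟨x, ?_⟩, ⟨y, ?_⟩, ?_⟩
  · intro v
    by_cases hv : v ∈ C
    · simp [hv]
    · by_cases hr : (G.induce Cᶜ).Reachable x ⟨v, hv⟩
      · left; simpa using ⟨hv, hr⟩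
      · right; left; simpa using ⟨hv, hr⟩
  · intro v
    simp only [Finset.mem_filter, Finset.mem_univ, true_and]
    rintro ⟨h, hr⟩ ⟨h', hr'⟩
    exact hr' hr
  · intro v
    simp only [Finset.mem_filter, Finset.mem_univ, true_and]
    rintro ⟨h, hr⟩
    exact h
  · intro v
    simp only [Finset.mem_filter, Finset.mem_univ, true_and]
    rintro ⟨h, hr⟩
    exact h
  · intro a ha b hb hab
    simp only [Finset.mem_filter, Finset.mem_univ, true_and] at ha hb
    obtain ⟨h, hr⟩ := ha
    obtain ⟨h', hr'⟩ := hb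
    refine hr' (hr.trans (SimpleGraph.Adj.reachable ?_))
    exact hab
  · simp only [Finset.mem_filter, Finset.mem_univ, true_and]
    exact ⟨x.2, SimpleGraph.Reachable.refl _⟩
  · simpa using ⟨y.2, hxy⟩
  · rw [← hC, Set.ncard_eq_toFinset_card']
    apply Finset.card_le_card
    intro v
    simp

/-- A separation can be shrunk so that every vertex of the separator `C` has neighbours on both
sides: a vertex of `C` without neighbours in `A` is moved to `B`, and conversely. -/
theorem IsSep.exists_minimal {V : Type*} [Fintype V] [DecidableEq V] {G : SimpleGraph V} (n : ℕ) :
    ∀ A B C : Finset V, IsSep G A B C → A.Nonempty → B.Nonempty → C.card = n →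
    ∃ A B C : Finset V, IsSep G A B C ∧ A.Nonempty ∧ B.Nonempty ∧ C.card ≤ n ∧
      (∀ c ∈ C, ∃ a ∈ A, G.Adj c a) ∧ (∀ c ∈ C, ∃ b ∈ B, G.Adj c b) ∧ A.card ≤ B.card := by
  induction n with
  | zero =>
    intro A B C h hA hB hC
    have : C = ∅ := Finset.card_eq_zero.1 hC
    subst this
    rcases le_total A.card B.card with hle | hle
    · exact ⟨A, B, ∅, h, hA, hB, by simp, by simp, by simp, hle⟩
    · exact ⟨B, A, ∅, h.swap, hB, hA, by simp, by simp, by simp, hle⟩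
  | succ n ih =>
    have main : ∀ A B C : Finset V, IsSep G A B C → A.Nonempty → B.Nonempty → C.card = n + 1 →
        (∃ c ∈ C, ∀ a ∈ A, ¬ G.Adj c a) →
        ∃ A B C : Finset V, IsSep G A B C ∧ A.Nonempty ∧ B.Nonempty ∧ C.card ≤ n + 1 ∧
        (∀ c ∈ C, ∃ a ∈ A, G.Adj c a) ∧ (∀ c ∈ C, ∃ b ∈ B, G.Adj c b) ∧ A.card ≤ B.card := by
      rintro A B C h hA hB hC ⟨c, hc, hca⟩
      have hsep : IsSep G A (insert c B) (C.erase c) := by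
        refine ⟨fun v => ?_, fun v hv hvB => ?_, fun v hv hvC => ?_, fun v hv hvC => ?_,
          fun a ha b hb hab => ?_⟩
        · have := h.cover v
          rw [Finset.mem_insert, Finset.mem_erase]
          tauto
        · rcases Finset.mem_insert.1 hvB with rfl | hvB
          · exact h.disjAC _ hv hc
          · exact h.disjAB _ hv hvB
        · exact h.disjAC _ hv (Finset.mem_of_mem_erase hvC)
        · rcases Finset.mem_insert.1 hv with rfl | hv
          · exact Finset.notMem_erase _ _ hvC
          · exact h.disjBC _ hv (Finset.mem_of_mem_erase hvC)
        · rcases Finset.mem_insert.1 hb with rfl | hb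
          · exact hca a ha hab.symm
          · exact h.noEdge a ha b hb hab
      obtain ⟨A', B', C', h1, h2, h3, h4, h5⟩ := ih A (insert c B) (C.erase c)
        hsep hA ⟨c, Finset.mem_insert_self _ _⟩
          (by rw [Finset.card_erase_of_mem hc, hC]; rfl)
      exact ⟨A', B', C', h1, h2, h3, by omega, h5⟩
    intro A B C h hA hB hC
    by_cases h1 : ∃ c ∈ C, ∀ a ∈ A, ¬ G.Adj c a
    · exact main A B C h hA hB hC h1
    by_cases h2 : ∃ c ∈ C, ∀ b ∈ B, ¬ G.Adj c b
    · exact main B A C h.swap hB hA hC h2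
    push Not at h1 h2
    rcases le_total A.card B.card with hle | hle
    · exact ⟨A, B, C, h, hA, hB, hC.le, h1, h2, hle⟩
    · exact ⟨B, A, C, h.swap, hB, hA, hC.le, h2, h1, hle⟩

/-! ### Splitting a stress matrix along a separator -/

theorem IsSep.sum {V : Type*} [Fintype V] [DecidableEq V] {G : SimpleGraph V} {A B C : Finset V}
    (h : IsSep G A B C) (F : V → ℝ) :
    ∑ v, F v = ∑ v ∈ A, F v + ∑ v ∈ B, F v + ∑ v ∈ C, F v := by
  rw [← Finset.sum_union (Finset.disjoint_left.2 h.disjAB), ← Finset.sum_union]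
  · congr 1
    ext v
    have := h.cover v
    simp only [Finset.mem_union, Finset.mem_univ, true_iff]
    tauto
  · rw [Finset.disjoint_left]
    intro v hv
    rcases Finset.mem_union.1 hv with hv | hv
    · exact h.disjAC v hv
    · exact h.disjBC v hv

theorem aff_linear {V ι : Type*} (p : V → EuclideanSpace ℝ (Fin 3)) (s : Finset ι) (t : ι → ℝ)
    (a : ι → Fin 4 → ℝ) (v : V) :
    aff p (∑ i ∈ s, t i • a i) v = ∑ i ∈ s, t i * aff p (a i) v := by
  simp only [aff, Finset.sum_apply, Pi.smul_apply, smul_eq_mul, Finset.mul_sum, mul_add,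
    Finset.sum_add_distrib, Finset.sum_mul, mul_assoc]
  rw [Finset.sum_comm]

/-- `M1` is the part on `A ∪ C` of the matrix `M`: a symmetric matrix annihilating all affine
functions of the points, agreeing with `M` on the rows of `A` and zero on the rows of `B`. -/
structure IsSplit {V : Type*} [Fintype V] (p : V → EuclideanSpace ℝ (Fin 3))
    (A B : Finset V) (M M1 : V → V → ℝ) : Prop where
  symm : ∀ v w, M1 v w = M1 w v
  eq : ∀ a v, ∑ w, M1 v w * aff p a w = 0
  left : ∀ v ∈ A, ∀ w, M1 v w = M v w
  right : ∀ v ∈ B, ∀ w, M1 v w = 0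

/-- A stress matrix splits along a separator `C` of at most three vertices into parts on `A ∪ C`
and `B ∪ C`. Let `f c` be affine with value `1` at `c` and `0` on the rest of `C`. The part on
`A ∪ C` copies the entries of `M` in rows and columns of `A`, and has the entries
`T c c' = ∑ f c (a) * M a a' * f c' (a')` on `C`. -/
theorem IsStressMat.exists_split {V : Type*} [Fintype V] [DecidableEq V] {G : SimpleGraph V}
    (hV : 4 ≤ Fintype.card V) {p : V → EuclideanSpace ℝ (Fin 3)} (hp : Generic p)
    {M : V → V → ℝ} (h : IsStressMat G p M) {A B C : Finset V} (hS : IsSep G A B C)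
    (hC : C.card ≤ 3) :
    ∃ M1 M2 : V → V → ℝ, IsSplit p A B M M1 ∧ IsSplit p B A M M2 ∧
      ∀ v w, M v w = M1 v w + M2 v w := by
  have hAB : ∀ a ∈ A, ∀ b ∈ B, M a b = 0 := fun a ha b hb =>
    h.supp a b (fun e => hS.disjAB a ha (e ▸ hb)) (hS.noEdge a ha b hb)
  choose f hf using fun c => hp.interp hV C (by omega) (fun v => if v = c then 1 else 0)
  have key : ∀ a ∈ A, ∀ x, ∑ a' ∈ A, M a a' * aff p x a' = - ∑ c ∈ C, M a c * aff p x c := by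
    intro a ha x
    have h1 := h.eq x a
    rw [hS.sum, Finset.sum_eq_zero (s := B) fun b hb => by rw [hAB a ha b hb, zero_mul]] at h1
    linarith
  let T : V → V → ℝ := fun c c' => ∑ a ∈ A, aff p (f c) a * ∑ a' ∈ A, M a a' * aff p (f c') a'
  have hTsymm : ∀ c c', T c c' = T c' c := by
    intro c c'
    simp only [T, Finset.mul_sum]
    rw [Finset.sum_comm]
    refine Finset.sum_congr rfl fun a _ => Finset.sum_congr rfl fun a' _ => ?_
    rw [h.symm a' a]; ring
  have hT : ∀ c ∈ C, ∀ x, ∑ c' ∈ C, T c c' * aff p x c' = - ∑ a ∈ A, M c a * aff p x a := by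
    intro c hc x
    have h1 : ∀ a ∈ A, ∑ c' ∈ C, (∑ a' ∈ A, M a a' * aff p (f c') a') * aff p x c' =
        ∑ a' ∈ A, M a a' * aff p x a' := by
      intro a ha
      have h2 := key a ha (∑ c' ∈ C, aff p x c' • f c')
      simp only [aff_linear] at h2
      have h3 : ∀ c'' ∈ C, ∑ c' ∈ C, aff p x c' * aff p (f c') c'' = aff p x c'' := by
        intro c'' hc''
        rw [Finset.sum_eq_single c'' (fun c' _ hne => by
          rw [hf c' c'' hc'', if_neg hne.symm, mul_zero]) (fun hn => absurd hc'' hn),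
          hf c'' c'' hc'', if_pos rfl, mul_one]
      rw [Finset.sum_congr rfl (fun c'' hc'' => by rw [h3 c'' hc''] :
        ∀ c'' ∈ C, _ = M a c'' * aff p x c''), ← key a ha x] at h2
      rw [← h2]
      simp only [Finset.mul_sum, Finset.sum_mul]
      rw [Finset.sum_comm]
      refine Finset.sum_congr rfl fun a _ => Finset.sum_congr rfl fun a' _ => by ring
    have h4 : ∑ c' ∈ C, T c c' * aff p x c' =
        ∑ a ∈ A, aff p (f c) a * ∑ a' ∈ A, M a a' * aff p x a' := by
      have h1' : ∀ a ∈ A, aff p (f c) a * ∑ a' ∈ A, M a a' * aff p x a' =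
          aff p (f c) a * ∑ c' ∈ C, (∑ a' ∈ A, M a a' * aff p (f c') a') * aff p x c' :=
        fun a ha => by rw [h1 a ha]
      rw [Finset.sum_congr rfl h1']
      simp only [T, Finset.mul_sum, Finset.sum_mul]
      rw [Finset.sum_comm]
      refine Finset.sum_congr rfl fun a _ => Finset.sum_congr rfl fun c' _ =>
        Finset.sum_congr rfl fun a' _ => by ring
    rw [h4]
    have h5 : ∀ a' ∈ A, ∑ a ∈ A, M a' a * aff p (f c) a = - M a' c := by
      intro a' ha'
      rw [key a' ha', Finset.sum_eq_single c (fun c' hc' hne => by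
        rw [hf c c' hc', if_neg hne, mul_zero]) (fun hn => absurd hc hn), hf c c hc, if_pos rfl,
        mul_one]
    simp only [Finset.mul_sum]
    rw [Finset.sum_comm, ← Finset.sum_neg_distrib]
    refine Finset.sum_congr rfl fun a' ha' => ?_
    have h6 : ∀ a, aff p (f c) a * (M a a' * aff p x a') =
        (M a' a * aff p (f c) a) * aff p x a' := fun a => by rw [h.symm a a']; ring
    simp only [h6]
    rw [← Finset.sum_mul, h5 a' ha', h.symm a' c]
    ring
  let M1 : V → V → ℝ := fun v w => if v ∈ B ∨ w ∈ B then 0 else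
    if v ∈ A ∨ w ∈ A then M v w else T v w
  have hM1symm : ∀ v w, M1 v w = M1 w v := fun v w => by
    simp only [M1, or_comm (a := v ∈ _), h.symm v w, hTsymm v w]
  have hM1A : ∀ v ∈ A, ∀ w, M1 v w = M v w := fun v hv w => by
    by_cases hw : w ∈ B
    · simp [M1, hw, hAB v hv w hw]
    · simp [M1, hw, hv, hS.disjAB v hv]
  have hM1B : ∀ v ∈ B, ∀ w, M1 v w = 0 := fun v hv w => by simp [M1, hv]
  have hM1eq : ∀ a v, ∑ w, M1 v w * aff p a w = 0 := by
    intro x v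
    rcases hS.cover v with hv | hv | hv
    · simp only [hM1A v hv, h.eq]
    · simp [hM1B v hv]
    · rw [hS.sum]
      have e1 : ∑ w ∈ A, M1 v w * aff p x w = ∑ w ∈ A, M v w * aff p x w :=
        Finset.sum_congr rfl fun w hw => by rw [hM1symm, hM1A w hw, h.symm]
      have e2 : ∑ w ∈ B, M1 v w * aff p x w = 0 :=
        Finset.sum_eq_zero fun w hw => by rw [hM1symm, hM1B w hw, zero_mul]
      have e3 : ∑ w ∈ C, M1 v w * aff p x w = ∑ w ∈ C, T v w * aff p x w :=
        Finset.sum_congr rfl fun w hw => by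
          have n1 : v ∉ A := fun e => hS.disjAC v e hv
          have n2 : v ∉ B := fun e => hS.disjBC v e hv
          have n3 : w ∉ A := fun e => hS.disjAC w e hw
          have n4 : w ∉ B := fun e => hS.disjBC w e hw
          simp [M1, n1, n2, n3, n4]
      rw [e1, e2, e3, hT v hv]
      ring
  refine ⟨M1, fun v w => M v w - M1 v w, ⟨hM1symm, hM1eq, hM1A, hM1B⟩,
    ⟨fun v w => by rw [h.symm, hM1symm], fun a v => ?_, fun v hv w => ?_, fun v hv w => ?_⟩,
    fun v w => by ring⟩
  · simp only [sub_mul, Finset.sum_sub_distrib, h.eq, hM1eq, sub_zero]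
  · rw [hM1B v hv, sub_zero]
  · rw [hM1A v hv, sub_self]

/-- Spectral theorem for a real symmetric matrix, keeping only the nonzero eigenvalues. -/
theorem exists_spectral {V : Type*} [Fintype V] [DecidableEq V] (M : V → V → ℝ)
    (hM : ∀ v w, M v w = M w v) :
    ∃ (k : ℕ) (d : Fin k → ℝ) (u : Fin k → V → ℝ), (∀ r, d r ≠ 0) ∧ LinearIndependent ℝ u ∧
      (∀ v w, M v w = ∑ r, d r * (u r v * u r w)) ∧
      ∀ r v, ∑ w, M v w * u r w = d r * u r v := by
  have hH : (Matrix.of M).IsHermitian := by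
    ext v w
    simp [hM v w]
  let lam := hH.eigenvalues
  let b := hH.eigenvectorBasis
  have heig : ∀ i v, ∑ w, M v w * b i w = lam i * b i v := by
    intro i v
    have := congrFun (hH.mulVec_eigenvectorBasis i) v
    simpa [Matrix.mulVec, dotProduct] using this
  have hdelta : ∀ v w, ∑ i, b i v * b i w = if v = w then 1 else 0 := by
    intro v w
    have h1 := b.sum_repr (EuclideanSpace.single w (1 : ℝ))
    have h2 := congrArg (fun x : EuclideanSpace ℝ V => x v) h1
    simp only [b.repr_apply_apply] at h2
    rw [WithLp.ofLp_sum, Finset.sum_apply] at h2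
    simp only [PiLp.smul_apply, smul_eq_mul, EuclideanSpace.inner_single_right] at h2
    simp only [PiLp.single_apply] at h2
    rw [← h2]
    refine Finset.sum_congr rfl fun i _ => ?_
    simp [mul_comm]
  have hdec : ∀ v w, M v w = ∑ i, lam i * (b i v * b i w) := by
    intro v w
    have h1 : ∀ i, lam i * (b i v * b i w) = ∑ x, M v x * (b i x * b i w) := by
      intro i
      rw [← mul_assoc, ← heig, Finset.sum_mul]
      exact Finset.sum_congr rfl fun x _ => by ring
    simp only [h1]
    rw [Finset.sum_comm]
    simp only [← Finset.mul_sum, hdelta]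
    simp
  let I := {i : V // lam i ≠ 0}
  let e : Fin (Fintype.card I) ≃ I := (Fintype.equivFin I).symm
  refine ⟨Fintype.card I, fun r => lam (e r), fun r => b (e r), fun r => (e r).2, ?_, ?_,
    fun r v => heig _ v⟩
  · have h1 : LinearIndependent ℝ (fun i => b i) := b.orthonormal.linearIndependent
    have h2 := h1.comp (fun r => (e r : V)) (Subtype.val_injective.comp e.injective)
    exact h2.map' (WithLp.linearEquiv 2 ℝ (V → ℝ)).toLinearMap (LinearEquiv.ker _)
  · intro v w
    rw [hdec, e.sum_comp (fun i : I => lam i * (b i v * b i w))]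
    rw [← Finset.sum_subtype (Finset.univ.filter fun i => lam i ≠ 0) (p := fun i => lam i ≠ 0)
      (by simp) (fun i => lam i * (b i v * b i w))]
    refine (Finset.sum_filter_of_ne (p := fun i => lam i ≠ 0) fun i _ hi h0 => hi ?_).symm
    rw [h0, zero_mul]

/-! ### Diagonalized parts and dimension counts -/

/-- Data of a diagonalized quadratic form `∑ d r • u r (u r)ᵀ` with nonzero coefficients `d r` of
any sign, where the `u r` are linearly independent affine dependencies of `p` vanishing on `B`.
The *column* of a vertex `v` is the vector `fun r => u r v`. -/
structure IsSide {V : Type*} [Fintype V] (p : V → EuclideanSpace ℝ (Fin 3)) (B : Finset V)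
    {k : ℕ} (d : Fin k → ℝ) (u : Fin k → V → ℝ) : Prop where
  ne : ∀ r, d r ≠ 0
  indep : LinearIndependent ℝ u
  dep : ∀ r a, ∑ v, u r v * aff p a v = 0
  supp : ∀ r, ∀ v ∈ B, u r v = 0

theorem IsSplit.exists_side {V : Type*} [Fintype V] [DecidableEq V]
    {p : V → EuclideanSpace ℝ (Fin 3)} {A B : Finset V} {M M1 : V → V → ℝ}
    (h : IsSplit p A B M M1) :
    ∃ (k : ℕ) (d : Fin k → ℝ) (u : Fin k → V → ℝ), IsSide p B d u ∧
      ∀ v w, M1 v w = ∑ r, d r * (u r v * u r w) := by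
  obtain ⟨k, d, u, h1, h2, h3, h4⟩ := exists_spectral M1 h.symm
  refine ⟨k, d, u, ⟨h1, h2, fun r a => ?_, fun r v hv => ?_⟩, h3⟩
  · have h5 : d r * ∑ v, u r v * aff p a v = 0 := by
      rw [Finset.mul_sum]
      have h6 : ∀ v, d r * (u r v * aff p a v) = ∑ w, u r w * (M1 w v * aff p a v) := by
        intro v
        rw [← mul_assoc, ← h4, Finset.sum_mul]
        exact Finset.sum_congr rfl fun w _ => by rw [h.symm v w]; ring
      simp only [h6]
      rw [Finset.sum_comm]
      simp only [← Finset.mul_sum, h.eq, mul_zero, Finset.sum_const_zero]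
    exact (mul_eq_zero.1 h5).resolve_left (h1 r)
  · have h5 := h4 r v
    simp only [h.right v hv, zero_mul, Finset.sum_const_zero] at h5
    exact (mul_eq_zero.1 h5.symm).resolve_left (h1 r)

/-- Dimension count in `ℝ^X`, where `X` contains the supports of the `u r`: their span is
orthogonal to the affine functions, a space of dimension `4`, and to the `l` given independent
vectors `κ j`. The latter two spaces are independent, as an affine function vanishing on the at
least four points of `X \ S` is zero. -/
theorem IsSide.dim {V : Type*} [Fintype V] [DecidableEq V] {p : V → EuclideanSpace ℝ (Fin 3)}
    (hp : Generic p) {B : Finset V} {k : ℕ} {d : Fin k → ℝ} {u : Fin k → V → ℝ}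
    (h : IsSide p B d u) (X S : Finset V) (hX : ∀ v, v ∉ X → v ∈ B) (hXS : 4 ≤ (X \ S).card)
    (hSX : S ⊆ X)
    {l : ℕ} (κ : Fin l → V → ℝ) (hκ : LinearIndependent ℝ κ) (hκS : ∀ j, ∀ v ∉ S, κ j v = 0)
    (hκu : ∀ j r, ∑ v, κ j v * u r v = 0) : k + 4 + l ≤ X.card := by
  let Φ : ((Fin k → ℝ) × (Fin 4 → ℝ) × (Fin l → ℝ)) →ₗ[ℝ] (X → ℝ) :=
    { toFun := fun t x => ∑ r, t.1 r * u r x + (aff p t.2.1 x + ∑ j, t.2.2 j * κ j x)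
      map_add' := by
        intro s t
        funext x
        simp only [aff, Prod.fst_add, Prod.snd_add, Pi.add_apply, add_mul, Finset.sum_add_distrib]
        ring
      map_smul' := by
        intro c t
        funext x
        simp only [aff, Prod.smul_fst, Prod.smul_snd, Pi.smul_apply, smul_eq_mul, mul_assoc,
          ← Finset.mul_sum, RingHom.id_apply]
        ring }
  have hΦ : Function.Injective Φ := by
    refine (injective_iff_map_eq_zero Φ).2 ?_
    rintro ⟨t, a, s⟩ h0
    let x : V → ℝ := fun v => ∑ r, t r * u r v
    let y : V → ℝ := fun v => aff p a v + ∑ j, s j * κ j v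
    have hxX : ∀ v ∉ X, x v = 0 := fun v hv =>
      Finset.sum_eq_zero fun r _ => by rw [h.supp r v (hX v hv), mul_zero]
    have hxy : ∀ v ∈ X, x v + y v = 0 := fun v hv => congrFun h0 ⟨v, hv⟩
    have h1 : ∑ v, x v * y v = 0 := by
      simp only [x, Finset.sum_mul]
      rw [Finset.sum_comm]
      refine Finset.sum_eq_zero fun r _ => ?_
      simp only [mul_assoc, ← Finset.mul_sum, y, mul_add, Finset.sum_add_distrib, h.dep]
      have : ∀ v, ∑ j, u r v * (s j * κ j v) = ∑ j, s j * (κ j v * u r v) := fun v =>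
        Finset.sum_congr rfl fun j _ => by ring
      simp only [Finset.mul_sum, this]
      rw [mul_zero, zero_add, Finset.sum_comm]
      simp only [← Finset.mul_sum, hκu]
      simp
    have h2 : ∑ v, x v ^ 2 = 0 := by
      rw [← neg_eq_zero, ← Finset.sum_neg_distrib, ← h1]
      refine Finset.sum_congr rfl fun v _ => ?_
      by_cases hv : v ∈ X
      · have := hxy v hv
        have h3 : y v = - x v := by linarith
        rw [h3]; ring
      · rw [hxX v hv]; ring
    have hx0 : ∀ v, x v = 0 := fun v => by
      have := (Finset.sum_eq_zero_iff_of_nonneg (fun v _ => sq_nonneg (x v))).1 h2 v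
        (Finset.mem_univ v)
      exact pow_eq_zero_iff (two_ne_zero) |>.1 this
    have ht : t = 0 := by
      have := Fintype.linearIndependent_iff.1 h.indep t (by
        funext v
        simpa [Finset.sum_apply] using hx0 v)
      funext r; exact this r
    have hy0 : ∀ v ∈ X, y v = 0 := fun v hv => by
      have := hxy v hv
      rwa [hx0, zero_add] at this
    have ha : a = 0 := by
      refine hp.aff_eq_zero (X \ S) hXS a fun v hv => ?_
      rw [Finset.mem_sdiff] at hv
      have := hy0 v hv.1
      simpa [y, hκS _ v hv.2] using this
    have hs : s = 0 := by
      have := Fintype.linearIndependent_iff.1 hκ s (by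
        funext v
        by_cases hv : v ∈ X
        · have := hy0 v hv
          simpa [y, ha, aff, Finset.sum_apply] using this
        · have hvS : v ∉ S := fun hS => hv (hSX hS)
          simp [Finset.sum_apply, hκS _ v hvS])
      funext j; exact this j
    rw [ht, ha, hs]; rfl
  have := LinearMap.finrank_le_finrank_of_injective hΦ
  simp only [Module.finrank_prod, Module.finrank_fintype_fun_eq_card, Fintype.card_coe,
    Fintype.card_fin] at this
  omega

theorem IsSide.dim0 {V : Type*} [Fintype V] [DecidableEq V] {p : V → EuclideanSpace ℝ (Fin 3)}
    (hp : Generic p) {B : Finset V} {k : ℕ} {d : Fin k → ℝ} {u : Fin k → V → ℝ}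
    (h : IsSide p B d u) (X : Finset V) (hX : ∀ v, v ∉ X → v ∈ B) (hX4 : 4 ≤ X.card) :
    k + 4 ≤ X.card :=
  h.dim hp X ∅ hX (by simpa using hX4) (by simp) (l := 0) Fin.elim0 linearIndependent_empty_type
    (fun j => j.elim0) (fun j => j.elim0)

/-- The dimension count when the column of `w` is a multiple of the column of `v`. -/
theorem IsSide.dim1 {V : Type*} [Fintype V] [DecidableEq V] {p : V → EuclideanSpace ℝ (Fin 3)}
    (hp : Generic p) {B : Finset V} {k : ℕ} {d : Fin k → ℝ} {u : Fin k → V → ℝ}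
    (h : IsSide p B d u) (X : Finset V) (hX : ∀ v, v ∉ X → v ∈ B) (hX6 : 6 ≤ X.card)
    {v w : V} (hv : v ∈ X) (hw : w ∈ X) (hvw : v ≠ w) {s : ℝ} (hs : ∀ r, u r w = s * u r v) :
    k + 5 ≤ X.card := by
  refine h.dim hp X {v, w} hX ?_ ?_ (l := 1) (fun _ => Pi.single w 1 - s • Pi.single v 1) ?_ ?_ ?_
  · have := Finset.le_card_sdiff ({v, w} : Finset V) X
    rw [Finset.card_pair hvw] at this
    omega
  · intro x hx
    simp only [Finset.mem_insert, Finset.mem_singleton] at hx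
    rcases hx with rfl | rfl <;> assumption
  · rw [linearIndependent_unique_iff]
    intro h0
    have := congrFun h0 w
    simp [hvw.symm] at this
  · intro _ x hx
    simp only [Finset.mem_insert, Finset.mem_singleton, not_or] at hx
    simp [hx.1, hx.2]
  · intro _ r
    simp [sub_mul, Finset.sum_sub_distrib, Pi.single_apply, hs]

/-- The dimension count when the columns of `w` and `x` are multiples of the column of `v`. -/
theorem IsSide.dim2 {V : Type*} [Fintype V] [DecidableEq V] {p : V → EuclideanSpace ℝ (Fin 3)}
    (hp : Generic p) {B : Finset V} {k : ℕ} {d : Fin k → ℝ} {u : Fin k → V → ℝ}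
    (h : IsSide p B d u) (X : Finset V) (hX : ∀ v, v ∉ X → v ∈ B) (hX7 : 7 ≤ X.card)
    {v w x : V} (hv : v ∈ X) (hw : w ∈ X) (hx : x ∈ X) (hvw : v ≠ w) (hvx : v ≠ x) (hwx : w ≠ x)
    {s t : ℝ} (hs : ∀ r, u r w = s * u r v) (ht : ∀ r, u r x = t * u r v) :
    k + 6 ≤ X.card := by
  refine h.dim hp X {v, w, x} hX ?_ ?_ (l := 2)
    ![Pi.single w 1 - s • Pi.single v 1, Pi.single x 1 - t • Pi.single v 1] ?_ ?_ ?_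
  · have := Finset.le_card_sdiff ({v, w, x} : Finset V) X
    have h3 : ({v, w, x} : Finset V).card ≤ 3 := Finset.card_le_three
    omega
  · intro y hy
    simp only [Finset.mem_insert, Finset.mem_singleton] at hy
    rcases hy with rfl | rfl | rfl <;> assumption
  · rw [LinearIndependent.pair_iff]
    intro a b h0
    have h1 := congrFun h0 w
    have h2 := congrFun h0 x
    simp [hvw.symm, hvx.symm, hwx, hwx.symm] at h1 h2
    exact ⟨h1, h2⟩
  · intro j y hy
    simp only [Finset.mem_insert, Finset.mem_singleton, not_or] at hy
    fin_cases j <;> simp [hy.1, hy.2.1, hy.2.2]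
  · intro j r
    fin_cases j <;> simp [sub_mul, Finset.sum_sub_distrib, Pi.single_apply, hs, ht]

/-! ### Lifting orthogonality relations -/

/-- A vector orthogonal, for the form `diag d`, to linearly independent vectors lifts to a vector
orthogonal to prescribed lifts of them. -/
theorem lift_orth {O : Type*} [CommRing O] [Algebra ℚ O] (φ : O →ₐ[ℚ] ℝ)
    (hu : ∀ x, φ x ≠ 0 → IsUnit x) (hs : Function.Surjective φ)
    {K V : Type*} [Fintype K] [DecidableEq V] (d : K → O) (hd : ∀ r, φ (d r) ≠ 0)
    (G : V → K → O) (S : Finset V)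
    (hind : LinearIndepOn ℝ (fun w r => φ (G w r)) (S : Set V)) (g : K → ℝ)
    (h : ∀ w ∈ S, ∑ r, φ (d r) * (φ (G w r) * g r) = 0) :
    ∃ x : K → O, (∀ r, φ (x r) = g r) ∧ ∀ w ∈ S, ∑ r, d r * (G w r * x r) = 0 := by
  let D : (K → ℝ) →ₗ[ℝ] (K → ℝ) :=
    { toFun := fun x r => φ (d r) * x r
      map_add' := fun x y => by funext r; simp [mul_add]
      map_smul' := fun c x => by funext r; simp; ring }
  have hD : LinearMap.ker D = ⊥ := by
    rw [LinearMap.ker_eq_bot']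
    intro x hx
    funext r
    exact (mul_eq_zero.1 (congrFun hx r)).resolve_left (hd r)
  obtain ⟨x, hx1, hx2⟩ := lift_kernel φ hu hs
    (Matrix.of fun (w : (S : Set V)) r => d r * G w r) (by
      have e : (fun (w : (S : Set V)) r => φ (d r * G w r)) =
          D ∘ fun (w : (S : Set V)) r => φ (G w r) := by
        funext w r
        simp [D]
      have h2 : LinearIndependent ℝ (fun (w : (S : Set V)) r => φ (d r * G w r)) := by
        rw [e]
        exact LinearIndependent.map' hind D hD
      exact h2) g (fun w => by
        rw [← h w w.2]
        refine Finset.sum_congr rfl fun r _ => ?_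
        rw [Matrix.of_apply, map_mul, mul_assoc])
  refine ⟨x, hx1, fun w hw => ?_⟩
  rw [← hx2 ⟨w, hw⟩]
  exact Finset.sum_congr rfl fun r _ => by rw [Matrix.of_apply, mul_assoc]

/-- Lifts of the columns `g b` for `b ∈ B` preserving the orthogonalities between `N`-related
pairs, without changing the given lifts of the other columns. The vertices of `B` are treated one
at a time. -/
theorem lift_side {O : Type*} [CommRing O] [Algebra ℚ O] (φ : O →ₐ[ℚ] ℝ)
    (hu : ∀ x, φ x ≠ 0 → IsUnit x) (hs : Function.Surjective φ)
    {K V : Type*} [Fintype K] [DecidableEq V] (d : K → O) (hd : ∀ r, φ (d r) ≠ 0)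
    (g : V → K → ℝ) (G₀ : V → K → O) (hG₀ : ∀ v r, φ (G₀ v r) = g v r)
    (N : V → V → Prop) [DecidableRel N] (hNs : ∀ v w, N v w → N w v) (hNi : ∀ v, ¬ N v v)
    (B T : Finset V)
    (hN : ∀ b ∈ B, ∀ w ∈ T ∪ B, N b w → ∑ r, φ (d r) * (g b r * g w r) = 0)
    (hind : ∀ b ∈ B, LinearIndepOn ℝ g (((T ∪ B).filter (N b) : Finset V) : Set V)) :
    ∃ G : V → K → O, (∀ v r, φ (G v r) = g v r) ∧ (∀ v, v ∉ B → G v = G₀ v) ∧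
      ∀ b ∈ B, ∀ w ∈ T ∪ B, N b w → ∑ r, d r * (G b r * G w r) = 0 := by
  have main : ∀ B' : Finset V, B' ⊆ B → ∃ G : V → K → O, (∀ v r, φ (G v r) = g v r) ∧
      (∀ v, v ∉ B' → G v = G₀ v) ∧
      ∀ b ∈ B', ∀ w ∈ T ∪ B', N b w → ∑ r, d r * (G b r * G w r) = 0 := by
    intro B'
    induction B' using Finset.induction_on with
    | empty => exact fun _ => ⟨G₀, hG₀, fun _ _ => rfl, by simp⟩
    | insert b B' hb ih =>
      intro hB'
      have hbB : b ∈ B := hB' (Finset.mem_insert_self _ _)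
      obtain ⟨G, hG1, hG2, hG3⟩ := ih fun x hx => hB' (Finset.mem_insert_of_mem hx)
      have hG1' : (fun w r => φ (G w r)) = g := by funext w r; exact hG1 w r
      have hsub : T ∪ B' ⊆ T ∪ B := Finset.union_subset_union_right
        fun x hx => hB' (Finset.mem_insert_of_mem hx)
      obtain ⟨x, hx1, hx2⟩ := lift_orth φ hu hs d hd G ((T ∪ B').filter (N b)) (by
        rw [hG1']
        refine (hind b hbB).mono fun w hw => ?_
        simp only [Finset.coe_filter, Set.mem_ofPred_eq] at hw ⊢
        exact ⟨hsub hw.1, hw.2⟩) (g b) (fun w hw => by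
        rw [Finset.mem_filter] at hw
        rw [← hN b hbB w (hsub hw.1) hw.2]
        exact Finset.sum_congr rfl fun r _ => by rw [hG1]; ring)
      have hupd : ∀ w, w ≠ b → Function.update G b x w = G w := fun w hw =>
        Function.update_of_ne hw _ _
      have hnew : ∀ w ∈ T ∪ B', N b w →
          ∑ r, d r * (Function.update G b x b r * Function.update G b x w r) = 0 := by
        intro w hw hbw
        have hwb : w ≠ b := fun e => hNi b (e ▸ hbw)
        rw [hupd w hwb, Function.update_self, ← hx2 w (Finset.mem_filter.2 ⟨hw, hbw⟩)]
        exact Finset.sum_congr rfl fun r _ => by ring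
      have hmem : ∀ w ∈ T ∪ insert b B', w ≠ b → w ∈ T ∪ B' := by
        intro w hw hwb
        simp only [Finset.mem_union, Finset.mem_insert] at hw ⊢
        tauto
      refine ⟨Function.update G b x, fun v r => ?_, fun v hv => ?_, fun v hv w hw hvw => ?_⟩
      · by_cases hvb : v = b
        · subst hvb; rw [Function.update_self]; exact hx1 r
        · rw [hupd v hvb]; exact hG1 v r
      · rw [Finset.mem_insert, not_or] at hv
        rw [hupd v hv.1]; exact hG2 v hv.2
      · by_cases hvb : v = b
        · subst hvb
          exact hnew w (hmem w hw fun e => hNi v (e ▸ hvw)) hvw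
        · have hvB' : v ∈ B' := (Finset.mem_insert.1 hv).resolve_left hvb
          by_cases hwb : w = b
          · subst hwb
            rw [← hnew v (Finset.mem_union_right _ hvB') (hNs _ _ hvw)]
            exact Finset.sum_congr rfl fun r _ => by ring
          · rw [hupd v hvb, hupd w hwb]
            exact hG3 v hvB' w (hmem w hw hwb) hvw
  exact main B subset_rfl

theorem linearIndepOn_of_card_le_two {V E : Type*} [DecidableEq V] [AddCommGroup E] [Module ℝ E]
    (g : V → E) (S : Finset V) (hS : S.card ≤ 2) (h0 : ∀ v ∈ S, g v ≠ 0)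
    (h1 : ∀ v ∈ S, ∀ w ∈ S, v ≠ w → ∀ s : ℝ, g w ≠ s • g v) :
    LinearIndepOn ℝ g (S : Set V) := by
  have h3 : S.card = 0 ∨ S.card = 1 ∨ S.card = 2 := by omega
  rcases h3 with h3 | h3 | h3
  · rw [Finset.card_eq_zero.1 h3]; simp
  · obtain ⟨x, rfl⟩ := Finset.card_eq_one.1 h3
    simpa using h0 x (by simp)
  · obtain ⟨x, y, hxy, rfl⟩ := Finset.card_eq_two.1 h3
    rw [Finset.coe_pair, linearIndepOn_pair_iff g hxy (h0 x (by simp))]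
    intro s hs
    exact h1 x (by simp) y (by simp) hxy s hs.symm

theorem linearIndepOn_of_card_le_one {V E : Type*} [DecidableEq V] [AddCommGroup E] [Module ℝ E]
    (g : V → E) (S : Finset V) (hS : S.card ≤ 1) (h0 : ∀ v ∈ S, g v ≠ 0) :
    LinearIndepOn ℝ g (S : Set V) :=
  linearIndepOn_of_card_le_two g S (by omega) h0
    fun v hv w hw hvw => absurd (Finset.card_le_one.1 hS v hv w hw) hvw

/-! ### Split stresses -/

/-- A stress matrix of a generic framework on nine vertices, nonzero on all edges, written as the
sum of two diagonalized forms supported on the two sides `A ∪ C` and `B ∪ C` of a separation. The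
separator `C` has at most three vertices, each with neighbours in both `A` and `B`, and closed
neighbourhoods have more than four elements. -/
structure SplitStress {V : Type*} [Fintype V] [DecidableEq V] (G : SimpleGraph V)
    (p : V → EuclideanSpace ℝ (Fin 3)) (A B C : Finset V) {k₁ k₂ : ℕ}
    (d₁ : Fin k₁ → ℝ) (u₁ : Fin k₁ → V → ℝ) (d₂ : Fin k₂ → ℝ) (u₂ : Fin k₂ → V → ℝ) : Prop where
  gen : Generic p
  card : Fintype.card V = 9
  sep : IsSep G A B C
  cardC : C.card ≤ 3
  side₁ : IsSide p B d₁ u₁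
  side₂ : IsSide p A d₂ u₂
  stress : IsStressMat G p fun v w =>
    ∑ r, d₁ r * (u₁ r v * u₁ r w) + ∑ r, d₂ r * (u₂ r v * u₂ r w)
  full : ∀ v w, G.Adj v w →
    ∑ r, d₁ r * (u₁ r v * u₁ r w) + ∑ r, d₂ r * (u₂ r v * u₂ r w) ≠ 0
  nbhd : ∀ (v : V) (S : Finset V), (∀ w, w = v ∨ G.Adj v w → w ∈ S) → 4 < S.card
  nbrA : ∀ c ∈ C, ∃ a ∈ A, G.Adj c a
  nbrB : ∀ c ∈ C, ∃ b ∈ B, G.Adj c b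

namespace SplitStress

variable {V : Type*} [Fintype V] [DecidableEq V] {G : SimpleGraph V}
    {p : V → EuclideanSpace ℝ (Fin 3)} {A B C : Finset V} {k₁ k₂ : ℕ}
    {d₁ : Fin k₁ → ℝ} {u₁ : Fin k₁ → V → ℝ} {d₂ : Fin k₂ → ℝ} {u₂ : Fin k₂ → V → ℝ}

theorem swap (h : SplitStress G p A B C d₁ u₁ d₂ u₂) : SplitStress G p B A C d₂ u₂ d₁ u₁ where
  gen := h.gen
  card := h.card
  sep := h.sep.swap
  cardC := h.cardC
  side₁ := h.side₂
  side₂ := h.side₁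
  stress := by simpa only [add_comm] using h.stress
  full := by simpa only [add_comm] using h.full
  nbhd := h.nbhd
  nbrA := h.nbrB
  nbrB := h.nbrA

theorem exists_adj (h : SplitStress G p A B C d₁ u₁ d₂ u₂) (v : V) : ∃ w, G.Adj v w := by
  by_contra hcon
  push Not at hcon
  have := h.nbhd v {v} fun w hw => by
    rcases hw with rfl | hw
    · simp
    · exact absurd hw (hcon w)
  simp at this

/-- Entries at vertices of `A` only see the first part. -/
theorem eq_zero_of_not_adj (h : SplitStress G p A B C d₁ u₁ d₂ u₂) {a w : V} (ha : a ∈ A)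
    (haw : a ≠ w) (hn : ¬ G.Adj a w) : ∑ r, d₁ r * (u₁ r a * u₁ r w) = 0 := by
  have h1 := h.stress.supp a w haw hn
  simpa [h.side₂.supp _ a ha] using h1

/-- Columns in the first part are nonzero at all vertices of `A ∪ C`, since each of these has a
neighbour for which the stress entry comes from the first part alone. -/
theorem ne_zero₁ (h : SplitStress G p A B C d₁ u₁ d₂ u₂) {v : V} (hv : v ∉ B) :
    (fun r => u₁ r v) ≠ 0 := by
  intro h0
  have h0' : ∀ r, u₁ r v = 0 := fun r => congrFun h0 r
  rcases h.sep.cover v with hA | hB | hC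
  · obtain ⟨w, hw⟩ := h.exists_adj v
    apply h.full v w hw
    simp [h0', h.side₂.supp _ v hA]
  · exact hv hB
  · obtain ⟨a, ha, hva⟩ := h.nbrA v hC
    apply h.full v a hva
    simp [h0', h.side₂.supp _ a ha]

theorem card_eq (h : SplitStress G p A B C d₁ u₁ d₂ u₂) : A.card + B.card + C.card = 9 :=
  h.sep.card.trans h.card

theorem card_union (h : SplitStress G p A B C d₁ u₁ d₂ u₂) : (C ∪ A).card = C.card + A.card :=
  Finset.card_union_of_disjoint (Finset.disjoint_left.2 fun v hC hA => h.sep.disjAC v hA hC)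

theorem notMem_union (h : SplitStress G p A B C d₁ u₁ d₂ u₂) {v : V} (hv : v ∉ C ∪ A) : v ∈ B := by
  rw [Finset.mem_union, not_or] at hv
  have := h.sep.cover v
  tauto

theorem mem_union (h : SplitStress G p A B C d₁ u₁ d₂ u₂) {v : V} (hv : v ∈ C ∪ A) : v ∉ B := by
  intro hB
  rcases Finset.mem_union.1 hv with hv | hv
  · exact h.sep.disjBC v hB hv
  · exact h.sep.disjAB v hv hB

/-- Because closed neighbourhoods of vertices of `A` lie in `C ∪ A` and have at least five
elements, a vertex of `A` has at most `|C ∪ A| - 5` nonneighbours there. -/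
theorem card_filter (h : SplitStress G p A B C d₁ u₁ d₂ u₂) [DecidableRel fun v w => v ≠ w ∧ ¬ G.Adj v w]
    {a : V} (ha : a ∈ A) :
    ((C ∪ A).filter fun w => a ≠ w ∧ ¬ G.Adj a w).card + 5 ≤ C.card + A.card := by
  rw [← h.card_union]
  have h1 := Finset.card_filter_add_card_filter_not (s := C ∪ A) (fun w => a ≠ w ∧ ¬ G.Adj a w)
  have h2 := h.nbhd a ((C ∪ A).filter fun w => ¬ (a ≠ w ∧ ¬ G.Adj a w)) (fun w hw => by
    rw [Finset.mem_filter]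
    rcases hw with rfl | hw
    · exact ⟨Finset.mem_union_right _ ha, by simp⟩
    · refine ⟨?_, by simp [hw]⟩
      by_contra hn
      exact h.sep.noEdge a ha w (h.notMem_union hn) hw)
  omega

theorem card_ge (h : SplitStress G p A B C d₁ u₁ d₂ u₂) (hA : A.Nonempty) : 5 ≤ C.card + A.card := by
  classical
  obtain ⟨a, ha⟩ := hA
  have := h.card_filter ha
  omega

/-- The vectors of both parts together are independent: a vector in the span of both is an affine
dependency supported on `C`, hence zero. -/
theorem indep (h : SplitStress G p A B C d₁ u₁ d₂ u₂) :
    LinearIndependent ℝ (Sum.elim u₁ u₂) := by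
  rw [Fintype.linearIndependent_iff]
  intro t ht
  simp only [Fintype.sum_sum_type, Sum.elim_inl, Sum.elim_inr] at ht
  have hv : ∀ v, ∑ r, t (Sum.inl r) * u₁ r v + ∑ r, t (Sum.inr r) * u₂ r v = 0 := fun v => by
    have := congrFun ht v
    simpa [Finset.sum_apply] using this
  have h1 : (fun v => ∑ r, t (Sum.inl r) * u₁ r v) = 0 := by
    refine h.gen.dep_eq_zero (by rw [h.card]; omega) C (by have := h.cardC; omega) _
      (fun v hvC => ?_) (fun a => ?_)
    · rcases h.sep.cover v with hA | hB | hC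
      · have := hv v
        simpa [h.side₂.supp _ v hA] using this
      · simp [h.side₁.supp _ v hB]
      · exact absurd hC hvC
    · simp only [Finset.sum_mul, mul_assoc]
      rw [Finset.sum_comm]
      simp [← Finset.mul_sum, h.side₁.dep]
  have h2 : (fun v => ∑ r, t (Sum.inr r) * u₂ r v) = 0 := by
    funext v
    have e1 := hv v
    have e2 := congrFun h1 v
    simp only [Pi.zero_apply] at e2
    rw [e2, zero_add] at e1
    exact e1
  have h3 := Fintype.linearIndependent_iff.1 h.side₁.indep (fun r => t (Sum.inl r)) (by
    rw [← h1]; funext v; simp [Finset.sum_apply])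
  have h4 := Fintype.linearIndependent_iff.1 h.side₂.indep (fun r => t (Sum.inr r)) (by
    rw [← h2]; funext v; simp [Finset.sum_apply])
  rintro (r | r)
  · exact h3 r
  · exact h4 r

/-- It suffices to lift the columns of both parts so that the vanishing entries of the stress
matrix at nonadjacent pairs persist: within `C` for the sum of both forms, and at `A` and `B` for
the form of the respective part. -/
theorem conclude (h : SplitStress G p A B C d₁ u₁ d₂ u₂) {O : Type*} [CommRing O] [Algebra ℚ O]
    (φ ψ : O →ₐ[ℚ] ℝ)
    (hu : ∀ x, φ x ≠ 0 → IsUnit x) (hs : Function.Surjective φ) (hψ : Function.Injective ψ)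
    (D₁ : Fin k₁ → O) (D₂ : Fin k₂ → O) (hD₁ : ∀ r, φ (D₁ r) = d₁ r) (hD₂ : ∀ r, φ (D₂ r) = d₂ r)
    (hp₁ : ∀ r, 0 < ψ (D₁ r)) (hp₂ : ∀ r, 0 < ψ (D₂ r))
    (G₁ : V → Fin k₁ → O) (G₂ : V → Fin k₂ → O)
    (hG₁ : ∀ v r, φ (G₁ v r) = u₁ r v) (hG₂ : ∀ v r, φ (G₂ v r) = u₂ r v)
    (hC : ∀ c ∈ C, ∀ c' ∈ C, c ≠ c' → ¬ G.Adj c c' →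
      ∑ r, D₁ r * (G₁ c r * G₁ c' r) + ∑ r, D₂ r * (G₂ c r * G₂ c' r) = 0)
    (hA : ∀ a ∈ A, ∀ w ∈ C ∪ A, a ≠ w ∧ ¬ G.Adj a w → ∑ r, D₁ r * (G₁ a r * G₁ w r) = 0)
    (hB : ∀ b ∈ B, ∀ w ∈ C ∪ B, b ≠ w ∧ ¬ G.Adj b w → ∑ r, D₂ r * (G₂ b r * G₂ w r) = 0) :
    ∃ p : V → EuclideanSpace ℝ (Fin 3), Generic p ∧
      ∃ ω : V → V → ℝ, IsEqStress G p ω ∧ (stressMatrix ω).PosSemidef ∧ ω ≠ 0 := by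
  let U : Fin k₁ ⊕ Fin k₂ → V → O := Sum.elim (fun r v => if v ∈ B then 0 else G₁ v r)
    (fun r v => if v ∈ A then 0 else G₂ v r)
  have hU : (fun r v => φ (U r v)) = Sum.elim u₁ u₂ := by
    funext r v
    rcases r with r | r
    · by_cases hv : v ∈ B
      · simp [U, hv, h.side₁.supp r v hv]
      · simp [U, hv, hG₁]
    · by_cases hv : v ∈ A
      · simp [U, hv, h.side₂.supp r v hv]
      · simp [U, hv, hG₂]
  have hU' : ∀ r v, φ (U r v) = Sum.elim u₁ u₂ r v := fun r v => congrFun (congrFun hU r) v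
  have hdep : ∀ r a, ∑ v, Sum.elim u₁ u₂ r v * aff p a v = 0 := by
    rintro (r | r) a
    · exact h.side₁.dep r a
    · exact h.side₂.dep r a
  have hsym : ∀ v w, ∑ r, (Sum.elim D₁ D₂ r) * (U r v * U r w) =
      ∑ r, (Sum.elim D₁ D₂ r) * (U r w * U r v) := fun v w =>
    Finset.sum_congr rfl fun r _ => by ring
  refine psd_stress_of_lift φ ψ hu hs hψ G p h.gen U (Sum.elim D₁ D₂) ?_ ?_ ?_ ?_ ?_ ?_
  · rintro (r | r)
    · exact hp₁ r
    · exact hp₂ r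
  · rw [hU]; exact h.indep
  · intro r
    have := hdep r (Fin.cons 1 0)
    simp only [hU']
    simpa [aff] using this
  · intro r k
    have := hdep r (Pi.single k.succ 1)
    simp only [hU']
    simpa [aff, Pi.single_apply, Fin.succ_inj] using this
  · have hAall : ∀ v w, v ∈ A → v ≠ w → ¬ G.Adj v w →
        ∑ r, (Sum.elim D₁ D₂ r) * (U r v * U r w) = 0 := by
      intro v w hv hvw hn
      have hvB := h.sep.disjAB v hv
      by_cases hw : w ∈ B
      · simp [U, Fintype.sum_sum_type, hv, hw]
      · have hw' : w ∈ C ∪ A := by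
          by_contra hc
          exact hw (h.notMem_union hc)
        have := hA v hv w hw' ⟨hvw, hn⟩
        simpa [U, Fintype.sum_sum_type, hv, hw, hvB] using this
    have hBall : ∀ v w, v ∈ B → v ≠ w → ¬ G.Adj v w →
        ∑ r, (Sum.elim D₁ D₂ r) * (U r v * U r w) = 0 := by
      intro v w hv hvw hn
      have hvA := h.swap.sep.disjAB v hv
      by_cases hw : w ∈ A
      · simp [U, Fintype.sum_sum_type, hv, hw]
      · have hw' : w ∈ C ∪ B := by
          by_contra hc
          exact hw (h.swap.notMem_union hc)
        have := hB v hv w hw' ⟨hvw, hn⟩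
        simpa [U, Fintype.sum_sum_type, hv, hw, hvA] using this
    intro v w hvw hn
    have hn' : ¬ G.Adj w v := fun e => hn e.symm
    rcases h.sep.cover v with hv | hv | hv
    · exact hAall v w hv hvw hn
    · exact hBall v w hv hvw hn
    rcases h.sep.cover w with hw | hw | hw
    · rw [hsym]; exact hAall w v hw hvw.symm hn'
    · rw [hsym]; exact hBall w v hw hvw.symm hn'
    have e1 : v ∉ A := fun e => h.sep.disjAC v e hv
    have e2 : v ∉ B := fun e => h.sep.disjBC v e hv
    have e3 : w ∉ A := fun e => h.sep.disjAC w e hw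
    have e4 : w ∉ B := fun e => h.sep.disjBC w e hw
    have := hC v hv w hw hvw hn
    simpa [U, Fintype.sum_sum_type, e1, e2, e3, e4] using this
  · obtain ⟨v⟩ : Nonempty V := Fintype.card_pos_iff.1 (by rw [h.card]; omega)
    obtain ⟨w, hw⟩ := h.exists_adj v
    refine ⟨v, w, hw.ne, fun h0 => h.full v w hw ?_⟩
    have := congrArg φ h0
    rw [map_sum] at this
    simpa [Fintype.sum_sum_type, hU', hD₁, hD₂] using this

end SplitStress

/-! ### Lifting the columns of a split stress -/

/-- Distinct nonadjacent vertices. -/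
def NonAdj {V : Type*} (G : SimpleGraph V) (v w : V) : Prop := v ≠ w ∧ ¬ G.Adj v w

theorem NonAdj.symm {V : Type*} {G : SimpleGraph V} {v w : V} (h : NonAdj G v w) :
    NonAdj G w v := ⟨h.1.symm, fun e => h.2 e.symm⟩

theorem not_nonAdj_self {V : Type*} {G : SimpleGraph V} (v : V) : ¬ NonAdj G v v := fun h => h.1 rfl

namespace SplitStress

variable {V : Type*} [Fintype V] [DecidableEq V] {G : SimpleGraph V}
    {p : V → EuclideanSpace ℝ (Fin 3)} {A B C : Finset V} {k₁ k₂ : ℕ}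
    {d₁ : Fin k₁ → ℝ} {u₁ : Fin k₁ → V → ℝ} {d₂ : Fin k₂ → ℝ} {u₂ : Fin k₂ → V → ℝ}

/-- For `a ∈ A`, the columns of the nonneighbours of `a` in `C ∪ A` are independent. There are at
most two of them, and two occur only for `|C ∪ A| = 7`; if these are parallel then `k₁ ≤ 2`. The
value `2` is excluded by hypothesis, and smaller values contradict the orthogonality to the column
of `a`. -/
theorem side_indep [DecidableRel (NonAdj G)] (h : SplitStress G p A B C d₁ u₁ d₂ u₂)
    (h7 : C.card + A.card ≤ 7)
    (hk : C.card + A.card = 7 → k₁ ≠ 2) (a : V) (ha : a ∈ A) :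
    LinearIndepOn ℝ (fun v r => u₁ r v) (((C ∪ A).filter (NonAdj G a) : Finset V) : Set V) := by
  have hcount := @card_filter V _ _ G p A B C k₁ k₂ d₁ u₁ d₂ u₂ h
    (inferInstanceAs (DecidableRel (NonAdj G))) a ha
  have hcount' : ((C ∪ A).filter (NonAdj G a)).card + 5 ≤ C.card + A.card := hcount
  have h0 : ∀ v ∈ (C ∪ A).filter (NonAdj G a), (fun r => u₁ r v) ≠ 0 := fun v hv =>
    h.ne_zero₁ (h.mem_union (Finset.mem_filter.1 hv).1)
  refine linearIndepOn_of_card_le_two _ _ (by omega) h0 fun v hv w hw hvw s hs => ?_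
  have h2 : 1 < ((C ∪ A).filter (NonAdj G a)).card := Finset.one_lt_card.2 ⟨v, hv, w, hw, hvw⟩
  have e7 : C.card + A.card = 7 := by omega
  have hcu := h.card_union
  have hle := h.side₁.dim1 h.gen (C ∪ A) (fun x hx => h.notMem_union hx) (by omega)
    (Finset.mem_filter.1 hv).1 (Finset.mem_filter.1 hw).1 hvw (s := s) (fun r => congrFun hs r)
  have hk2 := hk e7
  have hk01 : k₁ = 0 ∨ k₁ = 1 := by omega
  have hav := (Finset.mem_filter.1 hv).2
  have hz := h.eq_zero_of_not_adj ha hav.1 hav.2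
  rcases hk01 with rfl | rfl
  · exact h0 v hv (funext fun r => r.elim0)
  · simp only [Fin.sum_univ_one, mul_eq_zero] at hz
    rcases hz with hz | hz | hz
    · exact h.side₁.ne 0 hz
    · refine h.ne_zero₁ (h.sep.disjAB a ha) (funext fun r => ?_)
      rw [Subsingleton.elim r 0]; exact hz
    · refine h0 v hv (funext fun r => ?_)
      rw [Subsingleton.elim r 0]; exact hz

/-- Under independence of the columns of nonneighbours, the lifts on `A` can be chosen orthogonal
where required, keeping prescribed lifts on `C`. -/
theorem extend (h : SplitStress G p A B C d₁ u₁ d₂ u₂) {O : Type*} [CommRing O] [Algebra ℚ O]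
    (φ : O →ₐ[ℚ] ℝ)
    (hu : ∀ x, φ x ≠ 0 → IsUnit x) (hs : Function.Surjective φ)
    (D₁ : Fin k₁ → O) (hD₁ : ∀ r, φ (D₁ r) = d₁ r)
    (G₁ : V → Fin k₁ → O) (hG₁ : ∀ v r, φ (G₁ v r) = u₁ r v) [DecidableRel (NonAdj G)]
    (hind : ∀ a ∈ A, LinearIndepOn ℝ (fun v r => u₁ r v)
      (((C ∪ A).filter (NonAdj G a) : Finset V) : Set V)) :
    ∃ G₁' : V → Fin k₁ → O, (∀ v r, φ (G₁' v r) = u₁ r v) ∧ (∀ v, v ∉ A → G₁' v = G₁ v) ∧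
      ∀ a ∈ A, ∀ w ∈ C ∪ A, NonAdj G a w → ∑ r, D₁ r * (G₁' a r * G₁' w r) = 0 := by
  refine lift_side φ hu hs D₁ (fun r => by rw [hD₁]; exact h.side₁.ne r) (fun v r => u₁ r v) G₁ hG₁
    (NonAdj G) (fun _ _ => NonAdj.symm) not_nonAdj_self A C (fun a ha w _ hn => ?_) hind
  simp only [hD₁]
  exact h.eq_zero_of_not_adj ha hn.1 hn.2

/-- The columns of the combined form on `C` lift with their orthogonalities, provided the columns of
the nonneighbours of some `c ∈ C` within `C` are independent. The vertex `c` is lifted last. -/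
theorem lift_sep (h : SplitStress G p A B C d₁ u₁ d₂ u₂) {O : Type*} [CommRing O] [Algebra ℚ O]
    (φ : O →ₐ[ℚ] ℝ)
    (hu : ∀ x, φ x ≠ 0 → IsUnit x) (hs : Function.Surjective φ)
    (D₁ : Fin k₁ → O) (D₂ : Fin k₂ → O) (hD₁ : ∀ r, φ (D₁ r) = d₁ r) (hD₂ : ∀ r, φ (D₂ r) = d₂ r)
    [DecidableRel (NonAdj G)] (c : V) (hc : c ∈ C)
    (hind : LinearIndepOn ℝ (fun v => (Sum.elim (fun r => u₁ r v) (fun r => u₂ r v) :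
      Fin k₁ ⊕ Fin k₂ → ℝ)) ((C.filter (NonAdj G c) : Finset V) : Set V)) :
    ∃ (G₁ : V → Fin k₁ → O) (G₂ : V → Fin k₂ → O),
      (∀ v r, φ (G₁ v r) = u₁ r v) ∧ (∀ v r, φ (G₂ v r) = u₂ r v) ∧
      ∀ c ∈ C, ∀ c' ∈ C, NonAdj G c c' →
        ∑ r, D₁ r * (G₁ c r * G₁ c' r) + ∑ r, D₂ r * (G₂ c r * G₂ c' r) = 0 := by
  let g : V → Fin k₁ ⊕ Fin k₂ → ℝ := fun v => Sum.elim (fun r => u₁ r v) (fun r => u₂ r v)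
  choose G₀ hG₀ using fun v r => hs (g v r)
  have hd : ∀ r, φ (Sum.elim D₁ D₂ r) ≠ 0 := by
    rintro (r | r)
    · simpa [hD₁] using h.side₁.ne r
    · simpa [hD₂] using h.side₂.ne r
  have hN : ∀ v w, NonAdj G v w → ∑ r, φ (Sum.elim D₁ D₂ r) * (g v r * g w r) = 0 := by
    intro v w hn
    have := h.stress.supp v w hn.1 hn.2
    simpa [Fintype.sum_sum_type, g, hD₁, hD₂] using this
  obtain ⟨G', hG'1, -, hG'3⟩ := lift_side φ hu hs (Sum.elim D₁ D₂) hd g G₀ hG₀ (NonAdj G)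
    (fun _ _ => NonAdj.symm) not_nonAdj_self (C.erase c) ∅ (fun b _ w _ => hN b w) (fun b hb => by
      have hcard : ((∅ ∪ C.erase c).filter (NonAdj G b)).card ≤ 1 := by
        have h1 : (∅ ∪ C.erase c).filter (NonAdj G b) ⊆ (C.erase c).erase b := by
          intro w hw
          simp only [Finset.empty_union, Finset.mem_filter] at hw
          exact Finset.mem_erase.2 ⟨hw.2.1.symm, hw.1⟩
        have h2 := Finset.card_le_card h1
        rw [Finset.card_erase_of_mem hb, Finset.card_erase_of_mem hc] at h2
        have := h.cardC
        omega
      refine linearIndepOn_of_card_le_one _ _ hcard fun v hv h0 => ?_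
      simp only [Finset.empty_union, Finset.mem_filter, Finset.mem_erase] at hv
      exact h.ne_zero₁ (fun hvB => h.sep.disjBC v hvB hv.1.2)
        (funext fun r => congrFun h0 (Sum.inl r)))
  obtain ⟨G'', hG1, hG2, hG3⟩ := lift_side φ hu hs (Sum.elim D₁ D₂) hd g G' hG'1 (NonAdj G)
    (fun _ _ => NonAdj.symm) not_nonAdj_self {c} (C.erase c) (fun b _ w _ => hN b w)
    (fun b hb => by
      rw [Finset.mem_singleton] at hb
      subst hb
      refine hind.mono fun w hw => ?_
      simp only [Finset.coe_filter, Finset.mem_union, Finset.mem_erase, Finset.mem_singleton,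
        Set.mem_ofPred_eq] at hw ⊢
      refine ⟨?_, hw.2⟩
      rcases hw.1 with h1 | rfl
      · exact h1.2
      · exact hc)
  refine ⟨fun v r => G'' v (Sum.inl r), fun v r => G'' v (Sum.inr r), fun v r => hG1 v _,
    fun v r => hG1 v _, ?_⟩
  have main : ∀ x ∈ C, ∀ y ∈ C, NonAdj G x y →
      ∑ r, (Sum.elim D₁ D₂ r) * (G'' x r * G'' y r) = 0 := by
    intro x hx y hy hn
    by_cases hxc : x = c
    · subst hxc
      exact hG3 x (by simp) y (by
        simp only [Finset.mem_union, Finset.mem_erase, Finset.mem_singleton]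
        exact Or.inl ⟨hn.1.symm, hy⟩) hn
    by_cases hyc : y = c
    · subst hyc
      rw [← hG3 y (by simp) x (by
        simp only [Finset.mem_union, Finset.mem_erase, Finset.mem_singleton]
        exact Or.inl ⟨hn.1, hx⟩) hn.symm]
      exact Finset.sum_congr rfl fun r _ => by ring
    · rw [hG2 x (by simpa using hxc), hG2 y (by simpa using hyc)]
      exact hG'3 x (Finset.mem_erase.2 ⟨hxc, hx⟩) y (by simp [hyc, hy]) hn
  intro x hx y hy hn
  simpa [Fintype.sum_sum_type] using main x hx y hy hn

end SplitStress

/-! ### Two one-dimensional parts -/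

/-- Any five points of a generic configuration carry an affine dependency that is nonzero at each
of them. -/
theorem Generic.exists_dep {V : Type*} [Fintype V] [DecidableEq V]
    {p : V → EuclideanSpace ℝ (Fin 3)} (hp : Generic p) (hV : 4 ≤ Fintype.card V)
    (S : Finset V) (hS : S.card = 5) :
    ∃ κ : V → ℝ, (∀ v ∉ S, κ v = 0) ∧ (∀ a, ∑ v, κ v * aff p a v = 0) ∧ ∀ v ∈ S, κ v ≠ 0 := by
  let Φ : (S → ℝ) →ₗ[ℝ] (Fin 4 → ℝ) :=
    { toFun := fun t j => ∑ v : S, t v * (Fin.cons 1 (fun k : Fin 3 => p v k) : Fin 4 → ℝ) j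
      map_add' := fun s t => by
        funext j
        simp only [Pi.add_apply, add_mul, Finset.sum_add_distrib]
      map_smul' := fun c t => by
        funext j
        simp only [Pi.smul_apply, smul_eq_mul, mul_assoc, Finset.mul_sum, RingHom.id_apply] }
  have hker : LinearMap.ker Φ ≠ ⊥ := LinearMap.ker_ne_bot_of_finrank_lt (by
    simp only [Module.finrank_fintype_fun_eq_card, Fintype.card_coe, Fintype.card_fin, hS]
    omega)
  obtain ⟨t, ht, ht0⟩ := Submodule.exists_mem_ne_zero_of_ne_bot hker
  let κ : V → ℝ := fun v => if hv : v ∈ S then t ⟨v, hv⟩ else 0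
  have hκS : ∀ v ∉ S, κ v = 0 := fun v hv => by simp [κ, hv]
  have hκt : ∀ v : S, κ v = t v := fun v => by simp [κ]
  have hdep : ∀ a, ∑ v, κ v * aff p a v = 0 := by
    intro a
    have h1 : ∑ v, κ v * aff p a v = ∑ v : S, t v * aff p a v := by
      rw [← Finset.sum_subset (Finset.subset_univ S) (fun v _ hv => by rw [hκS v hv, zero_mul]),
        ← Finset.sum_coe_sort]
      exact Finset.sum_congr rfl fun v _ => by rw [hκt]
    rw [h1]
    simp only [aff_eq_dot, Finset.mul_sum]
    rw [Finset.sum_comm]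
    refine Finset.sum_eq_zero fun j _ => ?_
    simp only [← mul_assoc, ← Finset.sum_mul]
    have : ∑ v : S, t v * (Fin.cons 1 (fun k : Fin 3 => p v k) : Fin 4 → ℝ) j = 0 := congrFun ht j
    rw [this, zero_mul]
  refine ⟨κ, hκS, hdep, fun v hv h0 => ht0 ?_⟩
  have h1 := hp.dep_eq_zero hV (S.erase v) (by rw [Finset.card_erase_of_mem hv, hS]) κ
    (fun w hw => by
      by_cases hwv : w = v
      · rw [hwv, h0]
      · exact hκS w fun h => hw (Finset.mem_erase.2 ⟨hwv, h⟩)) hdep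
  funext x
  rw [← hκt, h1]; rfl

namespace SplitStress

variable {V : Type*} [Fintype V] [DecidableEq V] {G : SimpleGraph V}
    {p : V → EuclideanSpace ℝ (Fin 3)} {A B C : Finset V}

/-- With a one-dimensional part, every vertex of `A` is adjacent to all of `C ∪ A`. -/
theorem adj_of_one {k₂ : ℕ} {d₁ : Fin 1 → ℝ} {u₁ : Fin 1 → V → ℝ} {d₂ : Fin k₂ → ℝ}
    {u₂ : Fin k₂ → V → ℝ} (h : SplitStress G p A B C d₁ u₁ d₂ u₂) {a w : V} (ha : a ∈ A)
    (hw : w ∉ B) (haw : a ≠ w) : G.Adj a w := by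
  by_contra hn
  have hz := h.eq_zero_of_not_adj ha haw hn
  simp only [Fin.sum_univ_one, mul_eq_zero] at hz
  rcases hz with hz | hz | hz
  · exact h.side₁.ne 0 hz
  · exact h.ne_zero₁ (h.sep.disjAB a ha) (funext fun r => by rw [Subsingleton.elim r 0]; exact hz)
  · exact h.ne_zero₁ hw (funext fun r => by rw [Subsingleton.elim r 0]; exact hz)

/-- The two parts cannot both be one-dimensional. Let `α` be an affine dependency on `C` and two
vertices of `A`, and let `δ`, `ε`, `ζ` be affine dependencies on three vertices of `B` and two
vertices of `C`, one for each pair in `C`. Subtracting suitable multiples of `δ δᵀ`, `ε εᵀ`, `ζ ζᵀ`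
from `α αᵀ` cancels the entries within `C`. As all pairs within `A ∪ C` or `B ∪ C`, except those in
`C`, are adjacent by `adj_of_one`, the result is a stress matrix of `G`. It involves only eight of
the nine vertices, against full support in a circuit. -/
theorem not_one_one_aux {d₁ : Fin 1 → ℝ} {u₁ : Fin 1 → V → ℝ} {d₂ : Fin 1 → ℝ}
    {u₂ : Fin 1 → V → ℝ} (h : SplitStress G p A B C d₁ u₁ d₂ u₂) (hcirc : IsCircuitGraph 3 G)
    (hC : C.card = 3) (hA2 : 2 ≤ A.card) (hB3 : 3 ≤ B.card) : False := by
  have hV : 4 ≤ Fintype.card V := by rw [h.card]; omega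
  obtain ⟨A', hA'A, hA'⟩ := Finset.exists_subset_card_eq hA2
  obtain ⟨B', hB'B, hB'⟩ := Finset.exists_subset_card_eq hB3
  obtain ⟨c₁, c₂, c₃, h12, h13, h23, rfl⟩ := Finset.card_eq_three.1 hC
  obtain ⟨a, a', haa, rfl⟩ := Finset.card_eq_two.1 hA'
  have hcardeq := h.card_eq
  have hz : ∃ z, z ∉ ({c₁, c₂, c₃} : Finset V) ∧ z ∉ ({a, a'} : Finset V) ∧ z ∉ B' := by
    have : (({c₁, c₂, c₃} : Finset V) ∪ ({a, a'} ∪ B')).card < Fintype.card V := by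
      have e1 := Finset.card_union_le ({c₁, c₂, c₃} : Finset V) ({a, a'} ∪ B')
      have e2 := Finset.card_union_le ({a, a'} : Finset V) B'
      rw [h.card]; omega
    obtain ⟨z, hz⟩ := Finset.exists_mem_notMem_of_card_lt_card (s := _) (t := Finset.univ) this
    have hz := hz.2
    simp only [Finset.mem_union, not_or] at hz
    exact ⟨z, hz.1, hz.2.1, hz.2.2⟩
  obtain ⟨z, hzC, hzA, hzB⟩ := hz
  have hc : ∀ c ∈ ({c₁, c₂, c₃} : Finset V), c ∉ A ∧ c ∉ B := fun c hc =>
    ⟨fun e => h.sep.disjAC c e hc, fun e => h.sep.disjBC c e hc⟩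
  have hc1 := hc c₁ (by simp)
  have hc2 := hc c₂ (by simp)
  have hc3 := hc c₃ (by simp)
  have haA : a ∈ A := hA'A (by simp)
  have haA' : a' ∈ A := hA'A (by simp)
  -- `α` is supported on two vertices of `A` together with `C`
  obtain ⟨α, hα0, hαdep, hαne⟩ := h.gen.exists_dep hV ({a, a'} ∪ {c₁, c₂, c₃}) (by
    rw [Finset.card_union_of_disjoint, hA', hC]
    rw [Finset.disjoint_left]
    intro x hx hxC
    exact (hc x hxC).1 (hA'A hx))
  have hδ : ∀ c c', c ≠ c' → c ∉ B → c' ∉ B → ∃ κ : V → ℝ, (∀ v ∉ B' ∪ {c, c'}, κ v = 0) ∧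
      (∀ a, ∑ v, κ v * aff p a v = 0) ∧ ∀ v ∈ B' ∪ {c, c'}, κ v ≠ 0 := by
    intro c c' hcc h1 h2
    refine h.gen.exists_dep hV _ ?_
    rw [Finset.card_union_of_disjoint, hB', Finset.card_pair hcc]
    rw [Finset.disjoint_left]
    intro x hx hxC
    simp only [Finset.mem_insert, Finset.mem_singleton] at hxC
    rcases hxC with rfl | rfl
    · exact h1 (hB'B hx)
    · exact h2 (hB'B hx)
  obtain ⟨δ, hδ0, hδdep, hδne⟩ := hδ c₁ c₂ h12 hc1.2 hc2.2
  obtain ⟨ε, hε0, hεdep, hεne⟩ := hδ c₁ c₃ h13 hc1.2 hc3.2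
  obtain ⟨ζ, hζ0, hζdep, hζne⟩ := hδ c₂ c₃ h23 hc2.2 hc3.2
  have hA0 : ∀ v, v ∈ A → δ v = 0 ∧ ε v = 0 ∧ ζ v = 0 := by
    intro v hv
    have e1 : v ∉ B' := fun e => h.sep.disjAB v hv (hB'B e)
    have e2 : v ≠ c₁ := fun e => hc1.1 (e ▸ hv)
    have e3 : v ≠ c₂ := fun e => hc2.1 (e ▸ hv)
    have e4 : v ≠ c₃ := fun e => hc3.1 (e ▸ hv)
    exact ⟨hδ0 v (by simp [*]), hε0 v (by simp [*]), hζ0 v (by simp [*])⟩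
  have hB0 : ∀ v, v ∈ B → α v = 0 := by
    intro v hv
    refine hα0 v fun e => ?_
    rcases Finset.mem_union.1 e with e | e
    · exact h.sep.disjAB v (hA'A e) hv
    · exact (hc v e).2 hv
  have hδ3 : δ c₃ = 0 := hδ0 _ (by
    have : c₃ ∉ B' := fun e => hc3.2 (hB'B e)
    simp [this, h13.symm, h23.symm])
  have hε2 : ε c₂ = 0 := hε0 _ (by
    have : c₂ ∉ B' := fun e => hc2.2 (hB'B e)
    simp [this, h12.symm, h23])
  have hζ1 : ζ c₁ = 0 := hζ0 _ (by
    have : c₁ ∉ B' := fun e => hc1.2 (hB'B e)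
    simp [this, h12, h13])
  have hδ1 : δ c₁ ≠ 0 := hδne _ (by simp)
  have hδ2 : δ c₂ ≠ 0 := hδne _ (by simp)
  have hε1 : ε c₁ ≠ 0 := hεne _ (by simp)
  have hε3 : ε c₃ ≠ 0 := hεne _ (by simp)
  have hζ2 : ζ c₂ ≠ 0 := hζne _ (by simp)
  have hζ3 : ζ c₃ ≠ 0 := hζne _ (by simp)
  set x := α c₁ * α c₂ / (δ c₁ * δ c₂) with hx
  set y := α c₁ * α c₃ / (ε c₁ * ε c₃) with hy
  set t := α c₂ * α c₃ / (ζ c₂ * ζ c₃) with ht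
  have hx' : x * (δ c₁ * δ c₂) = α c₁ * α c₂ := by rw [hx]; field_simp
  have hy' : y * (ε c₁ * ε c₃) = α c₁ * α c₃ := by rw [hy]; field_simp
  have ht' : t * (ζ c₂ * ζ c₃) = α c₂ * α c₃ := by rw [ht]; field_simp
  let M : V → V → ℝ := fun v w =>
    α v * α w - x * (δ v * δ w) - y * (ε v * ε w) - t * (ζ v * ζ w)
  have hMsymm : ∀ v w, M v w = M w v := fun v w => by simp only [M]; ring
  have hMA : ∀ v w, v ∈ A → v ≠ w → ¬ G.Adj v w → M v w = 0 := by
    intro v w hv hvw hn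
    obtain ⟨e1, e2, e3⟩ := hA0 v hv
    have e4 : w ∈ B := by
      by_contra hw
      exact hn (h.adj_of_one hv hw hvw)
    simp [M, e1, e2, e3, hB0 w e4]
  have hMB : ∀ v w, v ∈ B → v ≠ w → ¬ G.Adj v w → M v w = 0 := by
    intro v w hv hvw hn
    have e4 : w ∈ A := by
      by_contra hw
      exact hn (h.swap.adj_of_one hv hw hvw)
    obtain ⟨e1, e2, e3⟩ := hA0 w e4
    simp [M, e1, e2, e3, hB0 v hv]
  have hM : IsStressMat G p M := by
    refine ⟨hMsymm, fun v w hvw hn => ?_, fun a v => ?_⟩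
    · have hn' : ¬ G.Adj w v := fun e => hn e.symm
      rcases h.sep.cover v with hv | hv | hv
      · exact hMA v w hv hvw hn
      · exact hMB v w hv hvw hn
      rcases h.sep.cover w with hw | hw | hw
      · rw [hMsymm]; exact hMA w v hw hvw.symm hn'
      · rw [hMsymm]; exact hMB w v hw hvw.symm hn'
      have k12 : M c₁ c₂ = 0 := by simp only [M, hx', hε2, hζ1]; ring
      have k13 : M c₁ c₃ = 0 := by simp only [M, hy', hδ3, hζ1]; ring
      have k23 : M c₂ c₃ = 0 := by simp only [M, ht', hδ3, hε2]; ring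
      simp only [Finset.mem_insert, Finset.mem_singleton] at hv hw
      rcases hv with rfl | rfl | rfl <;> rcases hw with rfl | rfl | rfl <;>
        first
        | exact absurd rfl hvw
        | assumption
        | (rw [hMsymm]; assumption)
    · have e1 : ∀ w, M v w * aff p a w = α v * (α w * aff p a w) - x * δ v * (δ w * aff p a w) -
          y * ε v * (ε w * aff p a w) - t * ζ v * (ζ w * aff p a w) := fun w => by
        simp only [M]; ring
      simp only [e1, Finset.sum_sub_distrib, ← Finset.mul_sum, hαdep, hδdep, hεdep, hζdep]
      ring
  obtain ⟨w, hw⟩ := h.exists_adj z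
  refine hM.full_support hcirc h.gen ⟨a, a', haa, ?_⟩ hw ?_
  · obtain ⟨e1, e2, e3⟩ := hA0 a haA
    simpa [M, e1, e2, e3] using ⟨hαne a (by simp), hαne a' (by simp)⟩
  · simp only [Finset.mem_insert, Finset.mem_singleton, not_or] at hzC hzA
    have e0 : α z = 0 := hα0 z (by simp [*])
    have e1 : δ z = 0 := hδ0 z (by simp [*])
    have e2 : ε z = 0 := hε0 z (by simp [*])
    have e3 : ζ z = 0 := hζ0 z (by simp [*])
    simp [M, e0, e1, e2, e3]

/-- The two parts of a split stress with `|C| = 3` are not both one-dimensional. -/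
theorem not_one_one {k₁ k₂ : ℕ} {d₁ : Fin k₁ → ℝ} {u₁ : Fin k₁ → V → ℝ} {d₂ : Fin k₂ → ℝ}
    {u₂ : Fin k₂ → V → ℝ} (h : SplitStress G p A B C d₁ u₁ d₂ u₂) (hcirc : IsCircuitGraph 3 G)
    (hC : C.card = 3) (hA : A.Nonempty) (hB : B.Nonempty) (hk₁ : k₁ = 1) (hk₂ : k₂ = 1) :
    False := by
  subst hk₁ hk₂
  have e1 := h.card_ge hA
  have e2 := h.swap.card_ge hB
  have e3 := h.card_eq
  by_cases hB3 : 3 ≤ B.card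
  · exact h.not_one_one_aux hcirc hC (by omega) hB3
  · exact h.swap.not_one_one_aux hcirc hC (by omega) (by omega)

end SplitStress

/-! ### The independent case -/

namespace SplitStress

variable {V : Type*} [Fintype V] [DecidableEq V] {G : SimpleGraph V}
    {p : V → EuclideanSpace ℝ (Fin 3)} {A B C : Finset V} {k₁ k₂ : ℕ}
    {d₁ : Fin k₁ → ℝ} {u₁ : Fin k₁ → V → ℝ} {d₂ : Fin k₂ → ℝ} {u₂ : Fin k₂ → V → ℝ}

theorem pos₁ (h : SplitStress G p A B C d₁ u₁ d₂ u₂) {v : V} (hv : v ∉ B) : 0 < k₁ := by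
  rcases Nat.eq_zero_or_pos k₁ with rfl | h0
  · exact absurd (funext fun r => r.elim0) (h.ne_zero₁ hv)
  · exact h0

/-- If independence fails at `c`, then the other two vertices of `C` have parallel columns, with
the same nonzero ratio in both parts. -/
theorem exists_parallel [DecidableRel (NonAdj G)] (h : SplitStress G p A B C d₁ u₁ d₂ u₂)
    {c : V} (hc : c ∈ C)
    (hind : ¬ LinearIndepOn ℝ (fun v => (Sum.elim (fun r => u₁ r v) (fun r => u₂ r v) :
      Fin k₁ ⊕ Fin k₂ → ℝ)) ((C.filter (NonAdj G c) : Finset V) : Set V)) :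
    ∃ v ∈ C, ∃ w ∈ C, v ≠ w ∧ v ≠ c ∧ w ≠ c ∧ ∃ s : ℝ, s ≠ 0 ∧
      (∀ r, u₁ r w = s * u₁ r v) ∧ ∀ r, u₂ r w = s * u₂ r v := by
  by_contra hcon
  apply hind
  have hsub : C.filter (NonAdj G c) ⊆ C.erase c := fun w hw => by
    rw [Finset.mem_filter] at hw
    exact Finset.mem_erase.2 ⟨hw.2.1.symm, hw.1⟩
  refine linearIndepOn_of_card_le_two _ _ ?_ (fun v hv h0 => ?_) fun v hv w hw hvw s hs => ?_
  · have := Finset.card_le_card hsub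
    rw [Finset.card_erase_of_mem hc] at this
    have := h.cardC
    omega
  · have hvC := (Finset.mem_erase.1 (hsub hv)).2
    exact h.ne_zero₁ (fun hvB => h.sep.disjBC v hvB hvC) (funext fun r => congrFun h0 (Sum.inl r))
  · have hv' := Finset.mem_erase.1 (hsub hv)
    have hw' := Finset.mem_erase.1 (hsub hw)
    have e1 : ∀ r, u₁ r w = s * u₁ r v := fun r => congrFun hs (Sum.inl r)
    have e2 : ∀ r, u₂ r w = s * u₂ r v := fun r => congrFun hs (Sum.inr r)
    refine hcon ⟨v, hv'.2, w, hw'.2, hvw, hv'.1, hw'.1, s, ?_, e1, e2⟩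
    rintro rfl
    exact h.ne_zero₁ (fun hwB => h.sep.disjBC w hwB hw'.2) (funext fun r => by simp [e1])

/-- Some `c ∈ C` satisfies the hypothesis of `lift_sep`. If none does, `exists_parallel` applies at
every `c`, and the dimension counts leave only `k₁ = k₂ = 1`, which `not_one_one` excludes. -/
theorem exists_lift_vertex [DecidableRel (NonAdj G)] (h : SplitStress G p A B C d₁ u₁ d₂ u₂)
    (hcirc : IsCircuitGraph 3 G) (hA : A.Nonempty) (hB : B.Nonempty) (hAB : A.card ≤ B.card) :
    ∃ c ∈ C, LinearIndepOn ℝ (fun v => (Sum.elim (fun r => u₁ r v) (fun r => u₂ r v) :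
      Fin k₁ ⊕ Fin k₂ → ℝ)) ((C.filter (NonAdj G c) : Finset V) : Set V) := by
  by_contra hcon
  push Not at hcon
  have e1 := h.card_ge hA
  have e2 := h.swap.card_ge hB
  have e3 := h.card_eq
  have e4 := h.cardC
  have e5 := h.card_union
  have e6 := h.swap.card_union
  obtain ⟨c, hc⟩ : C.Nonempty := Finset.card_pos.1 (by omega)
  obtain ⟨v, hv, w, hw, hvw, hvc, hwc, s, hs0, hs₁, hs₂⟩ := h.exists_parallel hc (hcon c hc)
  have hC3 : C.card = 3 := by
    have : ({c, v, w} : Finset V) ⊆ C := by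
      intro x hx
      simp only [Finset.mem_insert, Finset.mem_singleton] at hx
      rcases hx with rfl | rfl | rfl <;> assumption
    have h2 := Finset.card_le_card this
    rw [Finset.card_eq_three.2 ⟨c, v, w, hvc.symm, hwc.symm, hvw, rfl⟩] at h2
    omega
  have hcB : ∀ x ∈ C, x ∉ B := fun x hx hB => h.sep.disjBC x hB hx
  have hcA : ∀ x ∈ C, x ∉ A := fun x hx hA => h.sep.disjAC x hA hx
  have p1 := h.pos₁ (hcB c hc)
  have p2 := h.swap.pos₁ (hcA c hc)
  refine h.not_one_one hcirc hC3 hA hB ?_ ?_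
  · by_cases h5 : C.card + A.card = 5
    · have := h.side₁.dim0 h.gen (C ∪ A) (fun x hx => h.notMem_union hx) (by omega)
      omega
    · have := h.side₁.dim1 h.gen (C ∪ A) (fun x hx => h.notMem_union hx) (by omega)
        (Finset.mem_union_left _ hv) (Finset.mem_union_left _ hw) hvw hs₁
      omega
  · by_cases h7 : C.card + B.card = 7
    · -- the third vertex is parallel as well
      obtain ⟨v', hv', w', hw', hvw', hvc', hwc', t, ht0, -, ht₂⟩ := h.exists_parallel hv (hcon v hv)
      have hCeq : C = {c, v, w} := by
        symm
        refine Finset.eq_of_subset_of_card_le ?_ ?_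
        · intro x hx
          simp only [Finset.mem_insert, Finset.mem_singleton] at hx
          rcases hx with rfl | rfl | rfl <;> assumption
        · rw [hC3, Finset.card_eq_three.2 ⟨c, v, w, hvc.symm, hwc.symm, hvw, rfl⟩]
      have hc' : ∃ t : ℝ, ∀ r, u₂ r c = t * u₂ r v := by
        rw [hCeq] at hv' hw'
        simp only [Finset.mem_insert, Finset.mem_singleton] at hv' hw'
        rcases hv' with rfl | rfl | rfl
        · rcases hw' with rfl | rfl | rfl
          · exact absurd rfl hvw'
          · exact absurd rfl hwc'
          · refine ⟨t⁻¹ * s, fun r => ?_⟩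
            rw [mul_assoc, ← hs₂, ht₂]
            field_simp
        · exact absurd rfl hvc'
        · rcases hw' with rfl | rfl | rfl
          · exact ⟨t * s, fun r => by rw [ht₂, hs₂]; ring⟩
          · exact absurd rfl hwc'
          · exact absurd rfl hvw'
      obtain ⟨t', ht'⟩ := hc'
      have := h.side₂.dim2 h.gen (C ∪ B) (fun x hx => h.swap.notMem_union hx) (by omega)
        (Finset.mem_union_left _ hv) (Finset.mem_union_left _ hw) (Finset.mem_union_left _ hc)
        hvw hvc hwc hs₂ ht'
      omega
    · have := h.side₂.dim1 h.gen (C ∪ B) (fun x hx => h.swap.notMem_union hx) (by omega)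
        (Finset.mem_union_left _ hv) (Finset.mem_union_left _ hw) hvw hs₂
      omega

/-- The case in which every vertex of `A` and of `B` satisfies the independence needed for lifting
its column: `C` is lifted first, then `A` and `B`. -/
theorem conclude_of_indep (h : SplitStress G p A B C d₁ u₁ d₂ u₂)
    (hcirc : IsCircuitGraph 3 G) (hA : A.Nonempty) (hB : B.Nonempty) (hAB : A.card ≤ B.card)
    (hk : C.card + B.card = 7 → k₂ ≠ 2)
    {O : Type*} [CommRing O] [Algebra ℚ O] (φ ψ : O →ₐ[ℚ] ℝ)
    (hu : ∀ x, φ x ≠ 0 → IsUnit x) (hs : Function.Surjective φ) (hψ : Function.Injective ψ)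
    (D₁ : Fin k₁ → O) (D₂ : Fin k₂ → O) (hD₁ : ∀ r, φ (D₁ r) = d₁ r) (hD₂ : ∀ r, φ (D₂ r) = d₂ r)
    (hp₁ : ∀ r, 0 < ψ (D₁ r)) (hp₂ : ∀ r, 0 < ψ (D₂ r)) :
    ∃ p : V → EuclideanSpace ℝ (Fin 3), Generic p ∧
      ∃ ω : V → V → ℝ, IsEqStress G p ω ∧ (stressMatrix ω).PosSemidef ∧ ω ≠ 0 := by
  classical
  have e1 := h.card_ge hA
  have e2 := h.swap.card_ge hB
  have e3 := h.card_eq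
  have e4 := h.cardC
  obtain ⟨c, hc, hind⟩ := h.exists_lift_vertex hcirc hA hB hAB
  obtain ⟨G₁, G₂, hG₁, hG₂, hC⟩ := h.lift_sep φ hu hs D₁ D₂ hD₁ hD₂ c hc hind
  obtain ⟨G₁', hG₁', hsame₁, horth₁⟩ := h.extend φ hu hs D₁ hD₁ G₁ hG₁
    (h.side_indep (by omega) (by omega))
  obtain ⟨G₂', hG₂', hsame₂, horth₂⟩ := h.swap.extend φ hu hs D₂ hD₂ G₂ hG₂
    (h.swap.side_indep (by omega) hk)
  refine h.conclude φ ψ hu hs hψ D₁ D₂ hD₁ hD₂ hp₁ hp₂ G₁' G₂' hG₁' hG₂' ?_ horth₁ horth₂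
  intro x hx y hy hxy hn
  rw [hsame₁ x (fun e => h.sep.disjAC x e hx), hsame₁ y (fun e => h.sep.disjAC y e hy),
    hsame₂ x (fun e => h.sep.disjBC x e hx), hsame₂ y (fun e => h.sep.disjBC y e hy)]
  exact hC x hx y hy ⟨hxy, hn⟩

end SplitStress

/-! ### Orthogonality relations in a plane -/

theorem exists_smul_of_cross {x m : Fin 2 → ℝ} (hm : m ≠ 0) (h : x 0 * m 1 = x 1 * m 0) :
    ∃ s : ℝ, ∀ r, x r = s * m r := by
  by_cases h0 : m 0 = 0
  · have h1 : m 1 ≠ 0 := fun h1 => hm (by funext r; fin_cases r <;> simp [h0, h1])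
    refine ⟨x 1 / m 1, Fin.forall_fin_two.2 ⟨?_, ?_⟩⟩
    · rw [h0, mul_zero] at h
      rw [(mul_eq_zero.1 h).resolve_right h1, h0, mul_zero]
    · field_simp
  · refine ⟨x 0 / m 0, Fin.forall_fin_two.2 ⟨?_, ?_⟩⟩
    · field_simp
    · field_simp; linarith

/-- `x` and `y` are parallel or orthogonal for the form `diag δ`. -/
def Linked (δ x y : Fin 2 → ℝ) : Prop :=
  x 0 * y 1 = x 1 * y 0 ∨ δ 0 * (x 0 * y 0) + δ 1 * (x 1 * y 1) = 0

theorem cross_trans {x y z : Fin 2 → ℝ} (hy : y ≠ 0)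
    (h1 : x 0 * y 1 = x 1 * y 0) (h2 : y 0 * z 1 = y 1 * z 0) : x 0 * z 1 = x 1 * z 0 := by
  obtain ⟨s, hs⟩ := exists_smul_of_cross hy h1
  rw [hs, hs]; linear_combination s * h2

theorem orth_cross_trans {δ x y z : Fin 2 → ℝ} (hy : y ≠ 0)
    (h1 : δ 0 * (x 0 * y 0) + δ 1 * (x 1 * y 1) = 0) (h2 : z 0 * y 1 = z 1 * y 0) :
    δ 0 * (x 0 * z 0) + δ 1 * (x 1 * z 1) = 0 := by
  obtain ⟨s, hs⟩ := exists_smul_of_cross hy h2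
  rw [hs, hs]; linear_combination s * h1

theorem exists_smul_of_orth {δ x y : Fin 2 → ℝ} (h0 : δ 0 ≠ 0) (h1 : δ 1 ≠ 0) (hy : y ≠ 0)
    (h : δ 0 * (x 0 * y 0) + δ 1 * (x 1 * y 1) = 0) :
    ∃ s : ℝ, x 0 = s * (- δ 1 * y 1) ∧ x 1 = s * (δ 0 * y 0) := by
  obtain ⟨s, hs⟩ := exists_smul_of_cross (x := x) (m := ![- δ 1 * y 1, δ 0 * y 0]) (by
    intro hm
    have e0 := congrFun hm 0
    have e1 := congrFun hm 1
    simp [h0, h1] at e0 e1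
    exact hy (by funext r; fin_cases r <;> simp [e0, e1])) (by simp; linarith)
  exact ⟨s, by simpa using hs 0, by simpa using hs 1⟩

theorem orth_trans {δ x y z : Fin 2 → ℝ} (h0 : δ 0 ≠ 0) (h1 : δ 1 ≠ 0) (hy : y ≠ 0)
    (hx : δ 0 * (x 0 * y 0) + δ 1 * (x 1 * y 1) = 0)
    (hz : δ 0 * (z 0 * y 0) + δ 1 * (z 1 * y 1) = 0) : x 0 * z 1 = x 1 * z 0 := by
  obtain ⟨s, e1, e2⟩ := exists_smul_of_orth h0 h1 hy hx
  obtain ⟨t, e3, e4⟩ := exists_smul_of_orth h0 h1 hy hz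
  rw [e1, e2, e3, e4]; ring

theorem Linked.symm {δ x y : Fin 2 → ℝ} (h : Linked δ x y) : Linked δ y x := by
  rcases h with h | h
  · left; linarith
  · right; linarith

theorem Linked.trans {δ x y z : Fin 2 → ℝ} (h0 : δ 0 ≠ 0) (h1 : δ 1 ≠ 0) (hy : y ≠ 0)
    (h : Linked δ x y) (h' : Linked δ y z) : Linked δ x z := by
  rcases h with h | h <;> rcases h' with h' | h'
  · exact Or.inl (cross_trans hy h h')
  · right
    have := orth_cross_trans (δ := δ) (x := z) (y := y) (z := x) hy (by linarith) h
    linarith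
  · right
    exact orth_cross_trans hy h (by linarith)
  · left
    exact orth_trans h0 h1 hy h (by linarith)

/-- Lifting orthogonality relations among vectors in a plane. Let `β v`, for `v ∈ W`, be nonzero
plane vectors, no three of them parallel. Then they have lifts preserving all orthogonalities for
the form `diag δ`, and these lifts can be prescribed on a set `W₀` no two elements of which are
linked. Being linked is an equivalence relation; in each class one representative is lifted
arbitrarily, and the other vectors are lifted to multiples of its lift or of the vector orthogonal
to it. -/
theorem lift_plane {O : Type*} [CommRing O] [Algebra ℚ O] (φ : O →ₐ[ℚ] ℝ)
    (hs : Function.Surjective φ) {V : Type*} [Nonempty V] [DecidableEq V]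
    (D : Fin 2 → O) (δ : Fin 2 → ℝ) (hD : ∀ r, φ (D r) = δ r) (hδ : ∀ r, δ r ≠ 0)
    (β : V → Fin 2 → ℝ) (G₀ : V → Fin 2 → O) (hG₀ : ∀ v r, φ (G₀ v r) = β v r)
    (W W₀ : Finset V) (hW₀ : W₀ ⊆ W) (hβ : ∀ v ∈ W, β v ≠ 0)
    (h3 : ∀ v ∈ W, ∀ w ∈ W, ∀ x ∈ W, v ≠ w → v ≠ x → w ≠ x → ∀ s t : ℝ,
      (∀ r, β w r = s * β v r) → (∀ r, β x r = t * β v r) → False)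
    (hlink : ∀ v ∈ W₀, ∀ w ∈ W₀, v ≠ w → ¬ Linked δ (β v) (β w)) :
    ∃ G : V → Fin 2 → O, (∀ v r, φ (G v r) = β v r) ∧ (∀ v ∈ W₀, G v = G₀ v) ∧
      ∀ v ∈ W, ∀ w ∈ W, v ≠ w → ∑ r, δ r * (β v r * β w r) = 0 →
        ∑ r, D r * (G v r * G w r) = 0 := by
  classical
  have h0 := hδ 0
  have h1 := hδ 1
  -- representatives of the classes of linked vertices, taken in `W₀` where possible
  have hf : ∀ K : Finset V, ∃ x : V, K.Nonempty → x ∈ K ∧ ((K ∩ W₀).Nonempty → x ∈ W₀) := by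
    intro K
    by_cases hK : (K ∩ W₀).Nonempty
    · obtain ⟨x, hx⟩ := hK
      rw [Finset.mem_inter] at hx
      exact ⟨x, fun _ => ⟨hx.1, fun _ => hx.2⟩⟩
    · by_cases hK' : K.Nonempty
      · obtain ⟨x, hx⟩ := hK'
        exact ⟨x, fun _ => ⟨hx, fun h => absurd h hK⟩⟩
      · exact ⟨Classical.arbitrary V, fun h => absurd h hK'⟩
  choose f hf using hf
  let K : V → Finset V := fun v => W.filter fun w => Linked δ (β v) (β w)
  have hKself : ∀ v ∈ W, v ∈ K v := fun v hv =>
    Finset.mem_filter.2 ⟨hv, Or.inl (by ring)⟩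
  let ρ : V → V := fun v => f (K v)
  have hρW : ∀ v ∈ W, ρ v ∈ W ∧ Linked δ (β v) (β (ρ v)) := fun v hv =>
    Finset.mem_filter.1 (hf (K v) ⟨v, hKself v hv⟩).1
  have hρW₀ : ∀ v ∈ W₀, ρ v = v := by
    intro v hv
    by_contra hne
    have hvW := hW₀ hv
    have := (hf (K v) ⟨v, hKself v hvW⟩).2 ⟨v, Finset.mem_inter.2 ⟨hKself v hvW, hv⟩⟩
    exact hlink v hv (ρ v) this (Ne.symm hne) (hρW v hvW).2
  have hρeq : ∀ v ∈ W, ∀ w ∈ W, Linked δ (β v) (β w) → ρ v = ρ w := by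
    intro v hv w hw hvw
    have : K v = K w := Finset.filter_congr fun x _ =>
      ⟨fun h => (hvw.symm).trans h0 h1 (hβ v hv) h, fun h => hvw.trans h0 h1 (hβ w hw) h⟩
    simp only [ρ, this]
  have hex : ∀ v, ∃ g : Fin 2 → O, (∀ r, φ (g r) = β v r) ∧ (v ∈ W → v = ρ v → g = G₀ v) ∧
      (v ∈ W → v ≠ ρ v →
        δ 0 * (β v 0 * β (ρ v) 0) + δ 1 * (β v 1 * β (ρ v) 1) = 0 →
        ∃ l, g 0 = l * (- D 1 * G₀ (ρ v) 1) ∧ g 1 = l * (D 0 * G₀ (ρ v) 0)) ∧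
      (v ∈ W → v ≠ ρ v →
        ¬ δ 0 * (β v 0 * β (ρ v) 0) + δ 1 * (β v 1 * β (ρ v) 1) = 0 →
        ∃ l, ∀ r, g r = l * G₀ (ρ v) r) := by
    intro v
    by_cases hv : v ∈ W
    · by_cases hvρ : v = ρ v
      · exact ⟨G₀ v, hG₀ v, fun _ _ => rfl, fun _ h => absurd hvρ h, fun _ h => absurd hvρ h⟩
      obtain ⟨hρ, hl⟩ := hρW v hv
      by_cases hperp : δ 0 * (β v 0 * β (ρ v) 0) + δ 1 * (β v 1 * β (ρ v) 1) = 0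
      · obtain ⟨s, e1, e2⟩ := exists_smul_of_orth h0 h1 (hβ _ hρ) hperp
        obtain ⟨l, hl⟩ := hs s
        refine ⟨![l * (- D 1 * G₀ (ρ v) 1), l * (D 0 * G₀ (ρ v) 0)],
          Fin.forall_fin_two.2 ⟨?_, ?_⟩, fun _ h => absurd h hvρ,
          fun _ _ _ => ⟨l, rfl, rfl⟩, fun _ _ h => absurd hperp h⟩
        · simp [hl, hD, hG₀, e1]
        · simp [hl, hD, hG₀, e2]
      · obtain ⟨s, e1⟩ := exists_smul_of_cross (hβ _ hρ) (hl.resolve_right hperp)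
        obtain ⟨l, hl⟩ := hs s
        exact ⟨fun r => l * G₀ (ρ v) r, fun r => by simp [hl, hG₀, e1], fun _ h => absurd h hvρ,
          fun _ _ h => absurd h hperp, fun _ _ _ => ⟨l, fun _ => rfl⟩⟩
    · exact ⟨G₀ v, hG₀ v, fun h => absurd h hv, fun h => absurd h hv, fun h => absurd h hv⟩
  choose G hG hGρ hGperp hGpar using hex
  refine ⟨G, hG, fun v hv => hGρ v (hW₀ hv) (hρW₀ v hv).symm, fun v hv w hw hvw hperp => ?_⟩
  rw [Fin.sum_univ_two] at hperp ⊢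
  have hρ : ρ v = ρ w := hρeq v hv w hw (Or.inr hperp)
  obtain ⟨hρv, hlv⟩ := hρW v hv
  have hlw := (hρW w hw).2
  have hp1 := hGperp v hv
  have hp2 := hGpar v hv
  have hq1 := hGperp w hw
  have hq2 := hGpar w hw
  have hr1 := hGρ v hv
  have hr2 := hGρ w hw
  rw [← hρ] at hq1 hq2 hr2 hlw
  generalize ρ v = x at *
  by_cases hvx : v = x
  · subst hvx
    obtain ⟨l, e1, e2⟩ := hq1 hvw.symm (by linarith)
    rw [hr1 rfl, e1, e2]; ring
  by_cases hwx : w = x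
  · subst hwx
    obtain ⟨l, e1, e2⟩ := hp1 hvx hperp
    rw [hr2 rfl, e1, e2]; ring
  by_cases hv' : δ 0 * (β v 0 * β x 0) + δ 1 * (β v 1 * β x 1) = 0
  · by_cases hw' : δ 0 * (β w 0 * β x 0) + δ 1 * (β w 1 * β x 1) = 0
    · exfalso
      -- an isotropic class: `v`, `w`, `x` are pairwise parallel
      have c1 := orth_trans h0 h1 (hβ w hw) hperp (by linarith :
        δ 0 * (β x 0 * β w 0) + δ 1 * (β x 1 * β w 1) = 0)
      have c2 := orth_trans h0 h1 (hβ x hρv) hv' hw'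
      obtain ⟨s, hs⟩ := exists_smul_of_cross (x := β w) (hβ v hv) (by linarith)
      obtain ⟨t, ht⟩ := exists_smul_of_cross (x := β x) (hβ v hv) (by linarith)
      exact h3 v hv w hw x hρv hvw hvx hwx s t hs ht
    · obtain ⟨l, e1, e2⟩ := hp1 hvx hv'
      obtain ⟨l', e3⟩ := hq2 hwx hw'
      rw [e1, e2, e3, e3]; ring
  · by_cases hw' : δ 0 * (β w 0 * β x 0) + δ 1 * (β w 1 * β x 1) = 0
    · obtain ⟨l, e1, e2⟩ := hq1 hwx hw'
      obtain ⟨l', e3⟩ := hp2 hvx hv'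
      rw [e1, e2, e3, e3]; ring
    · exfalso
      have c1 := hlw.resolve_right hw'
      exact hv' (orth_cross_trans (hβ w hw) hperp (by linarith))

/-! ### The exceptional case -/

namespace SplitStress

variable {V : Type*} [Fintype V] [DecidableEq V] {G : SimpleGraph V}
    {p : V → EuclideanSpace ℝ (Fin 3)} {A B C : Finset V}
    {d₁ : Fin 1 → ℝ} {u₁ : Fin 1 → V → ℝ} {d₂ : Fin 2 → ℝ} {u₂ : Fin 2 → V → ℝ}

theorem entry_ne_zero (h : SplitStress G p A B C d₁ u₁ d₂ u₂) {v : V} (hv : v ∉ B) : u₁ 0 v ≠ 0 :=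
  fun h0 => h.ne_zero₁ hv (funext fun r => by rw [Subsingleton.elim r 0]; exact h0)

/-- No three vertices of `C ∪ B` have parallel columns in a two-dimensional part with
`|C ∪ B| = 7`. -/
theorem not_three_parallel (h : SplitStress G p A B C d₁ u₁ d₂ u₂) (hn : C.card + B.card = 7) :
    ∀ v ∈ C ∪ B, ∀ w ∈ C ∪ B, ∀ x ∈ C ∪ B, v ≠ w → v ≠ x → w ≠ x → ∀ s t : ℝ,
      (∀ r, u₂ r w = s * u₂ r v) → (∀ r, u₂ r x = t * u₂ r v) → False := by
  intro v hv w hw x hx hvw hvx hwx s t hs ht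
  have e := h.swap.card_union
  have := h.side₂.dim2 h.gen (C ∪ B) (fun x hx => h.swap.notMem_union hx) (by omega)
    hv hw hx hvw hvx hwx hs ht
  omega

/-- Let `C` have no edges. If the column of `c` in the second part is orthogonal to that of some
`b ∈ B`, then it is not linked to the column of any other `c' ∈ C`. Orthogonality of the latter two
would make a product of nonzero entries of the first part vanish. If they are parallel, then the
diagonal entry of the stress matrix at `c` is zero. Equilibrium at `c`, tested on the plane through
`B \ {b}`, and the dependency `u₁ 0`, tested on the plane through `C`, then give two proportional
linear relations at the vertices of `A`, contrary to `Generic.planes`. -/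
theorem not_linked (h : SplitStress G p A B C d₁ u₁ d₂ u₂)
    (hC : C.card = 3) (hA : A.card = 2) (hB : B.card = 4)
    (hCC : ∀ c ∈ C, ∀ c' ∈ C, ¬ G.Adj c c') {c c' b : V} (hc : c ∈ C) (hc' : c' ∈ C) (hcc : c ≠ c')
    (hb : b ∈ B) (hbc : ∑ r, d₂ r * (u₂ r b * u₂ r c) = 0) :
    ¬ Linked d₂ (fun r => u₂ r c) (fun r => u₂ r c') := by
  have hcB : ∀ x ∈ C, x ∉ B := fun x hx hB => h.sep.disjBC x hB hx
  have hcA : ∀ x ∈ C, x ∉ A := fun x hx hA => h.sep.disjAC x hA hx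
  have hd := h.side₁.ne 0
  have hrel : ∀ x ∈ C, ∀ y ∈ C, x ≠ y → d₁ 0 * (u₁ 0 x * u₁ 0 y) +
      (d₂ 0 * (u₂ 0 x * u₂ 0 y) + d₂ 1 * (u₂ 1 x * u₂ 1 y)) = 0 := by
    intro x hx y hy hxy
    have := h.stress.supp x y hxy (hCC x hx y hy)
    simpa [Fin.sum_univ_two] using this
  have hα := h.entry_ne_zero (hcB c hc)
  have hα' := h.entry_ne_zero (hcB c' hc')
  have h1 := hrel c hc c' hc' hcc
  rintro (hl | hl)
  swap
  · rw [hl, add_zero] at h1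
    simp [hd, hα, hα'] at h1
  obtain ⟨s, hs⟩ := exists_smul_of_cross (x := fun r => u₂ r c') (m := fun r => u₂ r c)
    (h.swap.ne_zero₁ (hcA c hc)) (by linarith)
  have hs0 := hs 0
  have hs1 := hs 1
  obtain ⟨c'', hc'', hne, hne'⟩ : ∃ c'' ∈ C, c'' ≠ c ∧ c'' ≠ c' := by
    have : 0 < ((C.erase c).erase c').card := by
      rw [Finset.card_erase_of_mem (Finset.mem_erase.2 ⟨hcc.symm, hc'⟩),
        Finset.card_erase_of_mem hc]
      omega
    obtain ⟨x, hx⟩ := Finset.card_pos.1 this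
    simp only [Finset.mem_erase] at hx
    exact ⟨x, hx.2.2, hx.2.1, hx.1⟩
  have hα'' := h.entry_ne_zero (hcB c'' hc'')
  have h2 := hrel c hc c'' hc'' hne.symm
  have h3 := hrel c' hc' c'' hc'' hne'.symm
  rw [hs0, hs1] at h1 h3
  have hαs : u₁ 0 c' = s * u₁ 0 c := by
    have : d₁ 0 * u₁ 0 c'' * (u₁ 0 c' - s * u₁ 0 c) = 0 := by linear_combination h3 - s * h2
    rcases mul_eq_zero.1 this with h | h
    · simp [hd, hα''] at h
    · linarith
  have hsne : s ≠ 0 := by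
    rintro rfl
    exact hα' (by rw [hαs, zero_mul])
  -- the diagonal entry of the stress matrix at `c` vanishes
  have hdiag : d₁ 0 * (u₁ 0 c * u₁ 0 c) + (d₂ 0 * (u₂ 0 c * u₂ 0 c) + d₂ 1 * (u₂ 1 c * u₂ 1 c)) = 0 := by
    have : s * (d₁ 0 * (u₁ 0 c * u₁ 0 c) +
        (d₂ 0 * (u₂ 0 c * u₂ 0 c) + d₂ 1 * (u₂ 1 c * u₂ 1 c))) = 0 := by
      rw [hαs] at h1
      linear_combination h1
    exact (mul_eq_zero.1 this).resolve_left hsne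
  have hCeq : C = {c, c', c''} := by
    symm
    refine Finset.eq_of_subset_of_card_le ?_ ?_
    · intro x hx
      simp only [Finset.mem_insert, Finset.mem_singleton] at hx
      rcases hx with rfl | rfl | rfl <;> assumption
    · rw [hC, Finset.card_eq_three.2 ⟨c, c', c'', hcc, hne.symm, hne'.symm, rfl⟩]
  obtain ⟨b₁, b₂, b₃, hb12, hb13, hb23, hBb⟩ := Finset.card_eq_three.1
    (show (B.erase b).card = 3 by rw [Finset.card_erase_of_mem hb, hB])
  obtain ⟨a₁, a₂, ha12, hAeq⟩ := Finset.card_eq_two.1 hA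
  have hbi : ∀ x, x = b₁ ∨ x = b₂ ∨ x = b₃ → x ∈ B := fun x hx =>
    Finset.mem_of_mem_erase (a := b) (by rw [hBb]; simpa using hx)
  have hinj : Function.Injective ![b₁, b₂, b₃, c, c', c'', a₁, a₂] := by
    have g1 := hbi b₁ (by simp)
    have g2 := hbi b₂ (by simp)
    have g3 := hbi b₃ (by simp)
    have ga : ∀ x ∈ A, x ∉ B ∧ x ∉ C := fun x hx => ⟨h.sep.disjAB x hx, h.sep.disjAC x hx⟩
    have ga1 := ga a₁ (by simp [hAeq])
    have ga2 := ga a₂ (by simp [hAeq])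
    have hBC : ∀ x ∈ B, x ≠ c ∧ x ≠ c' ∧ x ≠ c'' ∧ x ≠ a₁ ∧ x ≠ a₂ := by
      intro x hx
      refine ⟨?_, ?_, ?_, ?_, ?_⟩ <;> rintro rfl
      · exact hcB _ hc hx
      · exact hcB _ hc' hx
      · exact hcB _ hc'' hx
      · exact ga1.1 hx
      · exact ga2.1 hx
    have hCA : ∀ x ∈ C, x ≠ a₁ ∧ x ≠ a₂ := by
      intro x hx
      refine ⟨?_, ?_⟩ <;> rintro rfl
      · exact ga1.2 hx
      · exact ga2.2 hx
    have k1 := hBC _ g1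
    have k2 := hBC _ g2
    have k3 := hBC _ g3
    have k4 := hCA _ hc
    have k5 := hCA _ hc'
    have k6 := hCA _ hc''
    rw [← List.nodup_ofFn]
    simp [*, Ne.symm hne, Ne.symm hne']
  obtain ⟨f, g, ⟨f1, f2, f3⟩, ⟨g1, g2, g3⟩, hfg⟩ := h.gen.planes _ hinj
  simp only [Matrix.cons_val] at f1 f2 f3 g1 g2 g3 hfg
  have hA1 : ∀ F : V → ℝ, (∀ x ∈ B, F x = 0) → (∀ x ∈ C, F x = 0) → ∑ x, F x = F a₁ + F a₂ := by
    intro F hFB hFC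
    rw [← Finset.sum_pair ha12, ← hAeq]
    refine (Finset.sum_subset (Finset.subset_univ _) fun x _ hx => ?_).symm
    rcases h.sep.cover x with hx' | hx' | hx'
    · exact absurd hx' hx
    · exact hFB x hx'
    · exact hFC x hx'
  -- the dependency of the first part against the plane through `C`
  have eq1 : u₁ 0 a₁ * aff p g a₁ + u₁ 0 a₂ * aff p g a₂ = 0 := by
    rw [← h.side₁.dep 0 g, hA1]
    · intro x hx; rw [h.side₁.supp 0 x hx, zero_mul]
    · intro x hx
      rw [hCeq] at hx
      simp only [Finset.mem_insert, Finset.mem_singleton] at hx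
      rcases hx with rfl | rfl | rfl
      · rw [g1, mul_zero]
      · rw [g2, mul_zero]
      · rw [g3, mul_zero]
  -- equilibrium at `c` against the plane through `B \ {b}`
  have eq2 : u₁ 0 a₁ * aff p f a₁ + u₁ 0 a₂ * aff p f a₂ = 0 := by
    have e := h.stress.eq f c
    rw [hA1] at e
    · have z : ∀ x ∈ A, ∀ r, u₂ r x = 0 := fun x hx r => h.side₂.supp r x hx
      simp only [Fin.sum_univ_one, Fin.sum_univ_two, z a₁ (by simp [hAeq]), z a₂ (by simp [hAeq])]
        at e
      have : d₁ 0 * u₁ 0 c * (u₁ 0 a₁ * aff p f a₁ + u₁ 0 a₂ * aff p f a₂) = 0 := by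
        linear_combination e
      exact (mul_eq_zero.1 this).resolve_left (mul_ne_zero hd hα)
    · intro x hx
      by_cases hxb : x = b
      · subst hxb
        rw [Fin.sum_univ_two] at hbc
        simp only [Fin.sum_univ_one, Fin.sum_univ_two, h.side₁.supp 0 x hx]
        linear_combination (aff p f x) * hbc
      · have : x ∈ B.erase b := Finset.mem_erase.2 ⟨hxb, hx⟩
        rw [hBb] at this
        simp only [Finset.mem_insert, Finset.mem_singleton] at this
        rcases this with rfl | rfl | rfl
        · rw [f1, mul_zero]
        · rw [f2, mul_zero]
        · rw [f3, mul_zero]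
    · intro x hx
      simp only [Fin.sum_univ_one, Fin.sum_univ_two]
      by_cases hxc : x = c
      · rw [hxc, hdiag, zero_mul]
      · rw [hrel c hc x hx (Ne.symm hxc), zero_mul]
  -- `(u₁ 0 a₁, u₁ 0 a₂)` is a nonzero vector in the kernel of the matrix of values of `f` and `g`
  apply hfg
  have ha1 : u₁ 0 a₁ ≠ 0 := h.entry_ne_zero (h.sep.disjAB a₁ (by simp [hAeq]))
  have : u₁ 0 a₁ * (aff p f a₁ * aff p g a₂ - aff p f a₂ * aff p g a₁) = 0 := by
    linear_combination (aff p g a₂) * eq2 - (aff p f a₂) * eq1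
  exact (mul_eq_zero.1 this).resolve_left ha1

/-- The exceptional case `|A| = 2`, `|B| = 4`, `|C| = 3`, `k₁ = 1`, `k₂ = 2`. No relation at `A`
has to be lifted. If `C` has no edges, it is lifted first and `lift_plane` extends the lifts of
those columns that are orthogonal to some column of `B`. If `C` has an edge, `lift_plane` is applied
to the whole second part and the relations in `C` are solved for the entries of the first part. -/
theorem conclude_special_aux (h : SplitStress G p A B C d₁ u₁ d₂ u₂)
    (hcirc : IsCircuitGraph 3 G) (hC : C.card = 3) (hA : A.card = 2) (hB : B.card = 4)
    {O : Type*} [CommRing O] [Algebra ℚ O] (φ ψ : O →ₐ[ℚ] ℝ)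
    (hu : ∀ x, φ x ≠ 0 → IsUnit x) (hs : Function.Surjective φ) (hψ : Function.Injective ψ)
    (D₁ : Fin 1 → O) (D₂ : Fin 2 → O) (hD₁ : ∀ r, φ (D₁ r) = d₁ r) (hD₂ : ∀ r, φ (D₂ r) = d₂ r)
    (hp₁ : ∀ r, 0 < ψ (D₁ r)) (hp₂ : ∀ r, 0 < ψ (D₂ r)) :
    ∃ p : V → EuclideanSpace ℝ (Fin 3), Generic p ∧
      ∃ ω : V → V → ℝ, IsEqStress G p ω ∧ (stressMatrix ω).PosSemidef ∧ ω ≠ 0 := by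
  classical
  have : Nonempty V := Fintype.card_pos_iff.1 (by rw [h.card]; omega)
  have hcB : ∀ x ∈ C, x ∉ B := fun x hx hB => h.sep.disjBC x hB hx
  have hβ : ∀ v ∈ C ∪ B, (fun r => u₂ r v) ≠ 0 := fun v hv => h.swap.ne_zero₁ (h.swap.mem_union hv)
  have hvac : ∀ (G₁ : V → Fin 1 → O), ∀ a ∈ A, ∀ w ∈ C ∪ A, a ≠ w ∧ ¬ G.Adj a w →
      ∑ r, D₁ r * (G₁ a r * G₁ w r) = 0 := fun G₁ a ha w hw hn =>
    absurd (h.adj_of_one ha (h.mem_union hw) hn.1) hn.2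
  by_cases hCC : ∀ c ∈ C, ∀ c' ∈ C, ¬ G.Adj c c'
  · obtain ⟨c, hc, hind⟩ := h.exists_lift_vertex hcirc (Finset.card_pos.1 (by omega))
      (Finset.card_pos.1 (by omega)) (by omega)
    obtain ⟨G₁, G₂, hG₁, hG₂, hG⟩ := h.lift_sep φ hu hs D₁ D₂ hD₁ hD₂ c hc hind
    obtain ⟨G₂', hG₂', hsame, horth⟩ := lift_plane φ hs D₂ d₂ hD₂ h.side₂.ne (fun v r => u₂ r v)
      G₂ hG₂ (C ∪ B) (C.filter fun c => ∃ b ∈ B, ∑ r, d₂ r * (u₂ r b * u₂ r c) = 0)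
      ((Finset.filter_subset _ _).trans Finset.subset_union_left) hβ
      (h.not_three_parallel (by omega)) (fun v hv w hw hvw => by
        obtain ⟨hv, b, hb, hbv⟩ := Finset.mem_filter.1 hv
        exact h.not_linked hC hA hB hCC hv (Finset.mem_filter.1 hw).1 hvw hb hbv)
    refine h.conclude φ ψ hu hs hψ D₁ D₂ hD₁ hD₂ hp₁ hp₂ G₁ (fun v => if v ∈ C then G₂ v else G₂' v)
      hG₁ (fun v r => ?_) (fun x hx y hy hxy hn => ?_) (hvac G₁) (fun b hb w hw hn => ?_)
    · split_ifs
      · exact hG₂ v r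
      · exact hG₂' v r
    · simp only [if_pos hx, if_pos hy]
      exact hG x hx y hy ⟨hxy, hn⟩
    · have hz := h.swap.eq_zero_of_not_adj hb hn.1 hn.2
      have hw2 : (if w ∈ C then G₂ w else G₂' w) = G₂' w := by
        split_ifs with hwC
        · exact (hsame w (Finset.mem_filter.2 ⟨hwC, b, hb, hz⟩)).symm
        · rfl
      simp only [if_neg (h.sep.disjBC b hb), hw2]
      exact horth b (Finset.mem_union_right _ hb) w hw hn.1 hz
  · push Not at hCC
    obtain ⟨c₂, hc₂, c₃, hc₃, hadj⟩ := hCC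
    obtain ⟨c₁, hc₁, h12, h13⟩ : ∃ c₁ ∈ C, c₁ ≠ c₂ ∧ c₁ ≠ c₃ := by
      have : 0 < ((C.erase c₂).erase c₃).card := by
        rw [Finset.card_erase_of_mem (Finset.mem_erase.2 ⟨hadj.ne.symm, hc₃⟩),
          Finset.card_erase_of_mem hc₂]
        omega
      obtain ⟨x, hx⟩ := Finset.card_pos.1 this
      simp only [Finset.mem_erase] at hx
      exact ⟨x, hx.2.2, hx.2.1, hx.1⟩
    have hCeq : C = {c₁, c₂, c₃} := by
      symm
      refine Finset.eq_of_subset_of_card_le ?_ ?_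
      · intro x hx
        simp only [Finset.mem_insert, Finset.mem_singleton] at hx
        rcases hx with rfl | rfl | rfl <;> assumption
      · rw [hC, Finset.card_eq_three.2 ⟨c₁, c₂, c₃, h12, h13, hadj.ne, rfl⟩]
    choose G₀ hG₀ using fun (v : V) (r : Fin 2) => hs (u₂ r v)
    obtain ⟨G₂, hG₂, -, horth⟩ := lift_plane φ hs D₂ d₂ hD₂ h.side₂.ne (fun v r => u₂ r v)
      G₀ hG₀ (C ∪ B) ∅ (Finset.empty_subset _) hβ
      (h.not_three_parallel (by omega)) (fun v hv => absurd hv (Finset.notMem_empty v))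
    choose g hg using fun (v : V) => hs (u₁ 0 v)
    have hd := h.side₁.ne 0
    have hα := h.entry_ne_zero (hcB c₁ hc₁)
    -- the nonadjacent pairs in `C` all contain `c₁`, so the first coordinates can be solved for
    obtain ⟨i, hi⟩ := hu (D₁ 0 * g c₁) (by rw [map_mul, hD₁, hg]; exact mul_ne_zero hd hα)
    have hi' : D₁ 0 * g c₁ * (↑i⁻¹ : O) = 1 := by rw [← hi]; exact i.mul_inv
    have hφi : d₁ 0 * u₁ 0 c₁ * φ (↑i⁻¹ : O) = 1 := by
      have := congrArg φ hi'
      simpa [hD₁, hg] using this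
    let P : V → Prop := fun v => v ∈ C ∧ v ≠ c₁ ∧ ¬ G.Adj c₁ v
    let G₁ : V → Fin 1 → O := fun v _ =>
      if P v then - (D₂ 0 * (G₂ c₁ 0 * G₂ v 0) + D₂ 1 * (G₂ c₁ 1 * G₂ v 1)) * (↑i⁻¹ : O) else g v
    have hP₁ : ¬ P c₁ := fun e => e.2.1 rfl
    have hGP : ∀ v, P v → D₁ 0 * (G₁ c₁ 0 * G₁ v 0) +
        (D₂ 0 * (G₂ c₁ 0 * G₂ v 0) + D₂ 1 * (G₂ c₁ 1 * G₂ v 1)) = 0 := by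
      intro v hv
      simp only [G₁, if_pos hv, if_neg hP₁]
      linear_combination (-(D₂ 0 * (G₂ c₁ 0 * G₂ v 0) + D₂ 1 * (G₂ c₁ 1 * G₂ v 1))) * hi'
    refine h.conclude φ ψ hu hs hψ D₁ D₂ hD₁ hD₂ hp₁ hp₂ G₁ G₂ (fun v r => ?_) hG₂
      (fun x hx y hy hxy hn => ?_) (hvac G₁) (fun b hb w hw hn => ?_)
    · rw [Subsingleton.elim r 0]
      by_cases hv : P v
      · have e := h.stress.supp c₁ v hv.2.1.symm hv.2.2
        rw [Fin.sum_univ_one, Fin.sum_univ_two] at e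
        simp only [G₁, if_pos hv, map_mul, map_neg, map_add, hD₂, hG₂]
        linear_combination (-φ (↑i⁻¹ : O)) * e + (u₁ 0 v) * hφi
      · simp only [G₁, if_neg hv, hg]
    · rw [Fin.sum_univ_one, Fin.sum_univ_two]
      by_cases hx1 : x = c₁
      · subst hx1
        exact hGP y ⟨hy, hxy.symm, hn⟩
      by_cases hy1 : y = c₁
      · subst hy1
        have := hGP x ⟨hx, hxy, fun e => hn e.symm⟩
        linear_combination this
      exfalso
      rw [hCeq] at hx hy
      simp only [Finset.mem_insert, Finset.mem_singleton, hx1, hy1, false_or] at hx hy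
      rcases hx with rfl | rfl <;> rcases hy with rfl | rfl
      · exact hxy rfl
      · exact hn hadj
      · exact hn hadj.symm
      · exact hxy rfl
    · exact horth b (Finset.mem_union_right _ hb) w hw hn.1
        (h.swap.eq_zero_of_not_adj hb hn.1 hn.2)

end SplitStress

/-- The exceptional case `|C ∪ B| = 7`, `k₂ = 2`, which forces the numbers of
`conclude_special_aux`. -/
theorem SplitStress.conclude_special {V : Type*} [Fintype V] [DecidableEq V] {G : SimpleGraph V}
    {p : V → EuclideanSpace ℝ (Fin 3)} {A B C : Finset V} {k₁ k₂ : ℕ}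
    {d₁ : Fin k₁ → ℝ} {u₁ : Fin k₁ → V → ℝ} {d₂ : Fin k₂ → ℝ} {u₂ : Fin k₂ → V → ℝ}
    (h : SplitStress G p A B C d₁ u₁ d₂ u₂)
    (hcirc : IsCircuitGraph 3 G) (hA : A.Nonempty)
    (h7 : C.card + B.card = 7) (hk : k₂ = 2)
    {O : Type*} [CommRing O] [Algebra ℚ O] (φ ψ : O →ₐ[ℚ] ℝ)
    (hu : ∀ x, φ x ≠ 0 → IsUnit x) (hs : Function.Surjective φ) (hψ : Function.Injective ψ)
    (D₁ : Fin k₁ → O) (D₂ : Fin k₂ → O) (hD₁ : ∀ r, φ (D₁ r) = d₁ r) (hD₂ : ∀ r, φ (D₂ r) = d₂ r)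
    (hp₁ : ∀ r, 0 < ψ (D₁ r)) (hp₂ : ∀ r, 0 < ψ (D₂ r)) :
    ∃ p : V → EuclideanSpace ℝ (Fin 3), Generic p ∧
      ∃ ω : V → V → ℝ, IsEqStress G p ω ∧ (stressMatrix ω).PosSemidef ∧ ω ≠ 0 := by
  have e1 := h.card_ge hA
  have e2 := h.card_eq
  have e3 := h.cardC
  have e4 := h.card_union
  obtain ⟨a, ha⟩ := hA
  have hk1 := h.pos₁ (h.sep.disjAB a ha)
  have hk2 := h.side₁.dim0 h.gen (C ∪ A) (fun x hx => h.notMem_union hx) (by omega)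
  obtain rfl : k₁ = 1 := by omega
  subst hk
  exact h.conclude_special_aux hcirc (by omega) (by omega) (by omega) φ ψ hu hs hψ D₁ D₂ hD₁ hD₂
    hp₁ hp₂

/-! ### Conclusion -/

/-- Let G be a 3-rigid 3-circuit on 9 vertices having a separating set of
3 vertices.  Then there exists a generic framework (G,p) in ℝ³ with a nonzero PSD
equilibrium stress. -/
theorem separated_nine_circuit_psd_stress {V : Type*} [Fintype V] [DecidableEq V]
    (G : SimpleGraph V) (hcard : Fintype.card V = 9)
    (hrigid : IsRigidGraph 3 G) (hcirc : IsCircuitGraph 3 G)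
    (hsep : ∃ C : Set V, C.ncard = 3 ∧ ¬ (G.induce Cᶜ).Connected) :
    ∃ p : V → EuclideanSpace ℝ (Fin 3), Generic p ∧
      ∃ ω : V → V → ℝ, IsEqStress G p ω ∧ (stressMatrix ω).PosSemidef ∧ ω ≠ 0 := by
  have hV : 4 ≤ Fintype.card V := by omega
  obtain ⟨p, hp, ω, hω, hω0⟩ : ∃ p : V → EuclideanSpace ℝ (Fin 3), Generic p ∧
      ∃ ω : V → V → ℝ, IsEqStress G p ω ∧ ω ≠ 0 := by
    have := hcirc.1
    unfold IsIndepGraph at this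
    push Not at this
    exact this
  obtain ⟨hM, hne⟩ := IsStressMat.of_stress hω hω0
  obtain ⟨A₀, B₀, C₀, hS₀, hA₀, hB₀, hC₀⟩ := exists_sep hcard hsep
  obtain ⟨A, B, C, hS, hA, hB, hC, hCA, hCB, hAB⟩ :=
    IsSep.exists_minimal C₀.card A₀ B₀ C₀ hS₀ hA₀ hB₀ rfl
  have hC3 : C.card ≤ 3 := hC.trans hC₀
  obtain ⟨M₁, M₂, hs₁, hs₂, hsum⟩ := hM.exists_split hV hp hS hC3
  obtain ⟨k₁, d₁, u₁, side₁, hM₁⟩ := hs₁.exists_side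
  obtain ⟨k₂, d₂, u₂, side₂, hM₂⟩ := hs₂.exists_side
  have hMeq : (stressMatrix ω : V → V → ℝ) = fun v w =>
      ∑ r, d₁ r * (u₁ r v * u₁ r w) + ∑ r, d₂ r * (u₂ r v * u₂ r w) := by
    funext v w
    rw [hsum, hM₁, hM₂]
  have h : SplitStress G p A B C d₁ u₁ d₂ u₂ :=
    { gen := hp
      card := hcard
      sep := hS
      cardC := hC3
      side₁ := side₁
      side₂ := side₂
      stress := hMeq ▸ hM
      full := fun v w hvw => by
        have := hM.full_support hcirc hp hne hvw
        rwa [hMeq] at this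
      nbhd := fun v S hS => hM.four_lt_closedNbhd hcirc hrigid hV hp hne v S hS
      nbrA := hCA
      nbrB := hCB }
  obtain ⟨O, _, _, φ, ψ, hu, hψ, hlift⟩ := exists_real_place
  have hφ : Function.Surjective φ := fun z => (hlift z).imp fun _ hx => hx.1
  choose D₁ hD₁ hp₁ using fun r => hlift (d₁ r)
  choose D₂ hD₂ hp₂ using fun r => hlift (d₂ r)
  -- since `|A| ≤ |B|`, the exceptional numbers can only occur on the side of `B`
  by_cases hk : C.card + B.card = 7 ∧ k₂ = 2
  · exact h.conclude_special hcirc hA hk.1 hk.2 φ ψ hu hφ hψ D₁ D₂ hD₁ hD₂ hp₁ hp₂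
  · exact h.conclude_of_indep hcirc hA hB hAB (fun h7 h2 => hk ⟨h7, h2⟩) φ ψ hu hφ hψ D₁ D₂ hD₁ hD₂
      hp₁ hp₂
end

section
/- Let G = (V,E) be a (3,6)-sparse graph and let X, Y ⊆ V be 3-critical sets. (i) If |X ∩ Y| ≥ 3, or if |X ∩ Y| = 2 and the two vertices of X ∩ Y are non-adjacent in G, then d(X,Y) = 0 and X ∪ Y is 3-critical. (ii) If |X ∩ Y| = 2 and the two vertices of X ∩ Y are adjacent in G, then d(X,Y) ≤ 1 and i(X ∪ Y) = 3|X ∪ Y| − 6 − (1 − d(X,Y)). (iii) If |X ∩ Y| = 1, then d(X,Y) ≤ 3 and i(X ∪ Y) = 3|X ∪ Y| − 6 − (3 − d(X,Y)). -/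
/-!
Counting edges inside `X ∪ Y` gives the exact identity
`i(X ∪ Y) + i(X ∩ Y) = i(X) + i(Y) + d(X, Y)` (`edgesWithin_union_add_inter`).
With `|X ∪ Y| + |X ∩ Y| = |X| + |Y|`, critical sets `X` and `Y` therefore satisfy
`i(X ∪ Y) = (3|X ∪ Y| - 6) + (3|X ∩ Y| - 6) - i(X ∩ Y) + d(X, Y)`.
Sparsity bounds `i(X ∪ Y)` by `3|X ∪ Y| - 6`, which bounds `d(X, Y)` once `i(X ∩ Y)` is known:
it is at most `3|X ∩ Y| - 6` by sparsity if `|X ∩ Y| ≥ 3`, it is `0` or `1` according to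
adjacency if `|X ∩ Y| = 2`, and it is `0` if `|X ∩ Y| = 1`.
-/

/-!
Common rigidity-theoretic definitions, following the paper
"Computing maximum likelihood thresholds using graph rigidity".
-/

open scoped BigOperators

/-- An edge inside `X ∪ Y` lies inside `X`, or inside `Y`, or crosses between `X \ Y` and
`Y \ X`; only the edges inside `X ∩ Y` are counted twice. -/
theorem edgesWithin_union_add_inter {V : Type*} [Finite V] (G : SimpleGraph V) (X Y : Set V) :
    edgesWithin G (X ∪ Y) + edgesWithin G (X ∩ Y) =
      edgesWithin G X + edgesWithin G Y + crossEdges G X Y := by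
  unfold edgesWithin crossEdges
  set A := {e ∈ G.edgeSet | ∀ v ∈ e, v ∈ X} with hA
  set B := {e ∈ G.edgeSet | ∀ v ∈ e, v ∈ Y} with hB
  set C := {e ∈ G.edgeSet | ∃ u ∈ X \ Y, ∃ v ∈ Y \ X, e = s(u, v)} with hC
  have hU : {e ∈ G.edgeSet | ∀ v ∈ e, v ∈ X ∪ Y} = (A ∪ B) ∪ C := by
    ext e
    induction e with | _ a b
    simp only [hA, hB, hC, Set.mem_ofPred_eq, Set.mem_union, Sym2.mem_iff, forall_eq_or_imp,
      forall_eq, Set.mem_sdiff, Sym2.eq_iff]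
    constructor
    · rintro ⟨he, ha, hb⟩
      by_cases haX : a ∈ X <;> by_cases haY : a ∈ Y <;> by_cases hbX : b ∈ X <;>
        by_cases hbY : b ∈ Y <;> grind
    · grind
  have hI : {e ∈ G.edgeSet | ∀ v ∈ e, v ∈ X ∩ Y} = A ∩ B := by
    ext e
    simp only [hA, hB, Set.mem_ofPred_eq, Set.mem_inter_iff]
    grind
  have hdisj : Disjoint (A ∪ B) C := by
    rw [Set.disjoint_left]
    rintro e he ⟨-, u, hu, v, hv, rfl⟩
    rcases he with he | he
    · exact hv.2 (he.2 v (Sym2.mem_mk_right u v))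
    · exact hu.2 (he.2 u (Sym2.mem_mk_left u v))
  have h₁ := Set.ncard_union_eq hdisj
  have h₂ := Set.ncard_union_add_ncard_inter A B
  rw [hU, hI]
  omega

theorem edgesWithin_eq_zero {V : Type*} (G : SimpleGraph V) (S : Set V)
    (h : ∀ u ∈ S, ∀ v ∈ S, ¬ G.Adj u v) : edgesWithin G S = 0 := by
  have : {e ∈ G.edgeSet | ∀ v ∈ e, v ∈ S} = ∅ := by
    ext e
    induction e with | _ a b
    simp only [Set.mem_ofPred_eq, Sym2.mem_iff, forall_eq_or_imp, forall_eq,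
      SimpleGraph.mem_edgeSet, Set.mem_empty_iff_false]
    grind
  rw [edgesWithin, this, Set.ncard_empty]

theorem edgesWithin_eq_one {V : Type*} (G : SimpleGraph V) (S : Set V) (hS : S.ncard = 2)
    (h : ∃ u ∈ S, ∃ v ∈ S, G.Adj u v) : edgesWithin G S = 1 := by
  obtain ⟨u, hu, v, hv, huv⟩ := h
  obtain ⟨x, y, -, rfl⟩ := Set.ncard_eq_two.mp hS
  have : {e ∈ G.edgeSet | ∀ w ∈ e, w ∈ ({x, y} : Set V)} = {s(u, v)} := by
    ext e
    induction e with | _ a b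
    have hne := huv.ne
    simp only [Set.mem_ofPred_eq, Sym2.mem_iff, forall_eq_or_imp, forall_eq,
      SimpleGraph.mem_edgeSet, Set.mem_singleton_iff, Set.mem_insert_iff, Sym2.eq_iff] at hu hv ⊢
    constructor
    · rintro ⟨hab, ha, hb⟩
      have := hab.ne
      grind
    · rintro (⟨rfl, rfl⟩ | ⟨rfl, rfl⟩)
      · exact ⟨huv, hu, hv⟩
      · exact ⟨huv.symm, hv, hu⟩
  rw [edgesWithin, this, Set.ncard_singleton]

/-- counting argument for 3-critical sets in a (3,6)-sparse graph. -/
theorem three_critical_counting {V : Type*} [Fintype V] (G : SimpleGraph V)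
    (hsparse : Sparse36 G) (X Y : Set V)
    (hX : ThreeCritical G X) (hY : ThreeCritical G Y) :
    ((3 ≤ (X ∩ Y).ncard ∨
        ((X ∩ Y).ncard = 2 ∧ ∀ u ∈ X ∩ Y, ∀ v ∈ X ∩ Y, ¬ G.Adj u v)) →
      crossEdges G X Y = 0 ∧ ThreeCritical G (X ∪ Y)) ∧
    (((X ∩ Y).ncard = 2 ∧ (∃ u ∈ X ∩ Y, ∃ v ∈ X ∩ Y, G.Adj u v)) →
      crossEdges G X Y ≤ 1 ∧
      (edgesWithin G (X ∪ Y) : ℤ) =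
        3 * ((X ∪ Y).ncard : ℤ) - 6 - (1 - (crossEdges G X Y : ℤ))) ∧
    ((X ∩ Y).ncard = 1 →
      crossEdges G X Y ≤ 3 ∧
      (edgesWithin G (X ∪ Y) : ℤ) =
        3 * ((X ∪ Y).ncard : ℤ) - 6 - (3 - (crossEdges G X Y : ℤ))) := by
  obtain ⟨hX3, hXe⟩ := hX
  obtain ⟨hY3, hYe⟩ := hY
  have hcount := edgesWithin_union_add_inter G X Y
  have hcard := Set.ncard_union_add_ncard_inter X Y
  have hU3 : 3 ≤ (X ∪ Y).ncard := hX3.trans (Set.ncard_le_ncard Set.subset_union_left)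
  have hU := hsparse _ hU3
  refine ⟨?_, ?_, ?_⟩
  · rintro (h | ⟨h, hadj⟩)
    · have hI := hsparse _ h
      exact ⟨by omega, hU3, by omega⟩
    · have hI := edgesWithin_eq_zero G _ hadj
      exact ⟨by omega, hU3, by omega⟩
  · rintro ⟨h, hadj⟩
    have hI := edgesWithin_eq_one G _ h hadj
    exact ⟨by omega, by omega⟩
  · intro h
    have hI : edgesWithin G (X ∩ Y) = 0 := by
      obtain ⟨a, ha⟩ := Set.ncard_eq_one.mp h
      rw [ha]
      apply edgesWithin_eq_zero
      rintro u rfl v rfl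
      exact G.irrefl
    exact ⟨by omega, by omega⟩
end
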